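/- arXiv:2406.03444 — 2 statements merged into one kernel-verified Lean document; each statement's English description precedes it below -/
import Mathlib

section
/- Let Φ be a Φ-function (i.e. weak Φ-function, Φ ∈ Φ_w) with Φ ∈ (Dec)_q for some q ∈ [1, ∞). Then there exists a constant C depending only on Φ such that for every N ≥ 1, H ≥ 1, every N-dimensional subspace X_N ⊂ C(Ω) with X_N ∈ NI_{2,∞}(H), and every ε ∈ (0, 1/2], there are m points x₁, …, x_m ∈ Ω with m ≤ C·ε^{-2}·(log ε^{-1})·Φ(H²)·(log 2N)²·log 2H² such that a_Φ(1)^{-2}(1−ε)‖f‖_Φ ≤ ‖f‖_{Φ,x} ≤ a_Φ(1)²(1+ε)‖f‖_Φ for all f ∈ X_N. -/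
open MeasureTheory

noncomputable section

/-- The sup-norm (uniform norm) `‖f‖_∞ = sup_{x ∈ Ω} |f x|` of a real-valued function. -/
def supNorm {Ω : Type*} (f : Ω → ℝ) : ℝ := ⨆ x, |f x|

/-- The Luxemburg functional `‖f‖_Φ = inf {λ > 0 : ∫ Φ(|f|/λ) dμ ≤ 1}`. -/
def luxNorm {Ω : Type*} [MeasurableSpace Ω] (μ : Measure Ω) (Φ : ℝ → ℝ) (f : Ω → ℝ) : ℝ :=
  sInf {lam : ℝ | 0 < lam ∧ ∫ x, Φ (|f x| / lam) ∂μ ≤ 1}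

/-- The discrete Luxemburg functional `‖f‖_{Φ,x}` with respect to the uniform discrete
probability measure `(1/m) ∑_{j=1}^m δ_{x_j}`. -/
def discLuxNorm {Ω : Type*} (Φ : ℝ → ℝ) {m : ℕ} (x : Fin m → Ω) (f : Ω → ℝ) : ℝ :=
  sInf {lam : ℝ | 0 < lam ∧ (∑ j, Φ (|f (x j)| / lam)) / (m : ℝ) ≤ 1}

/-- The weighted discrete Luxemburg functional `‖f‖_{Φ,x,λ}` with respect to the discrete
probability measure `∑_{j=1}^m λ_j δ_{x_j}`. -/
def wDiscLuxNorm {Ω : Type*} (Φ : ℝ → ℝ) {m : ℕ} (x : Fin m → Ω) (w : Fin m → ℝ)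
    (f : Ω → ℝ) : ℝ :=
  sInf {lam : ℝ | 0 < lam ∧ (∑ j, w j * Φ (|f (x j)| / lam)) ≤ 1}

/-- `Φ : [0,∞) → [0,∞)` is a Φ-prefunction: increasing, `Φ(0) = 0`, `Φ(0+) = 0`,
`Φ(∞) = ∞` (stated for a function on `ℝ`, with the relevant conditions on `[0,∞)`). -/
structure IsPhiPrefun (Φ : ℝ → ℝ) : Prop where
  mono : MonotoneOn Φ (Set.Ici 0)
  map_zero : Φ 0 = 0
  nonneg : ∀ t : ℝ, 0 ≤ t → 0 ≤ Φ t
  tendsto_zero : Filter.Tendsto Φ (nhdsWithin 0 (Set.Ioi 0)) (nhds 0)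
  tendsto_atTop : Filter.Tendsto Φ Filter.atTop Filter.atTop

/-- `Φ ∈ (aInc)_p` with constant `a`: `t ↦ Φ(t) t^{-p}` is almost increasing on `(0,∞)`. -/
def AIncP (Φ : ℝ → ℝ) (p a : ℝ) : Prop :=
  ∀ s t : ℝ, 0 < s → s < t → Φ s / s ^ p ≤ a * (Φ t / t ^ p)

/-- `Φ ∈ (Inc)_p` : `t ↦ Φ(t) t^{-p}` is increasing on `(0,∞)`. -/
def IncP (Φ : ℝ → ℝ) (p : ℝ) : Prop :=
  ∀ s t : ℝ, 0 < s → s < t → Φ s / s ^ p ≤ Φ t / t ^ p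

/-- `Φ ∈ (Dec)_q` : `t ↦ Φ(t) t^{-q}` is decreasing on `(0,∞)`. -/
def DecQ (Φ : ℝ → ℝ) (q : ℝ) : Prop :=
  ∀ s t : ℝ, 0 < s → s < t → Φ t / t ^ q ≤ Φ s / s ^ q

/-- `Φ ∈ (aDec)_q` with constant `b`: `t ↦ Φ(t) t^{-q}` is almost decreasing on `(0,∞)`. -/
def ADecQ (Φ : ℝ → ℝ) (q b : ℝ) : Prop :=
  ∀ s t : ℝ, 0 < s → s < t → Φ t / t ^ q ≤ b * (Φ s / s ^ q)

/-- `t ↦ Φ(t) t^{-p}` is almost increasing with constant `a` on `(t_*, ∞)`. -/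
def AIncPOn (Φ : ℝ → ℝ) (p a tstar : ℝ) : Prop :=
  ∀ s t : ℝ, tstar < s → s < t → Φ s / s ^ p ≤ a * (Φ t / t ^ p)

/-- `t ↦ Φ(t) t^{-q}` is almost decreasing with constant `b` on `(t_*, ∞)`. -/
def ADecQOn (Φ : ℝ → ℝ) (q b tstar : ℝ) : Prop :=
  ∀ s t : ℝ, tstar < s → s < t → Φ t / t ^ q ≤ b * (Φ s / s ^ q)

/-- Entropy numbers `e_n(F, d)` of a set `F` with respect to a distance-like function `dd`:
the infimum of `ε > 0` such that `F` can be covered by `2^{2^n}` (one, for `n = 0`)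
`ε`-balls centered in `F`. -/
def entropyNumD {X : Type*} (dd : X → X → ℝ) (F : Set X) (n : ℕ) : ℝ :=
  sInf {ε : ℝ | 0 < ε ∧ ∃ T : Finset X, ↑T ⊆ F ∧
    T.card ≤ (if n = 0 then 1 else 2 ^ 2 ^ n) ∧ ∀ f ∈ F, ∃ g ∈ T, dd f g < ε}

/-- Sampling numbers `ϱ_m(F, ‖·‖)`: recovery by linear methods from samples at `m` points. -/
def sampNum {Ω : Type*} (nrm : (Ω → ℝ) → ℝ) (F : Set (Ω → ℝ)) (m : ℕ) : ℝ :=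
  sInf {r : ℝ | ∃ (x : Fin m → Ω) (T : (Fin m → ℝ) →ₗ[ℝ] (Ω → ℝ)),
    r = ⨆ f ∈ F, nrm (fun y => f y - T (fun j => f (x j)) y)}

/-- Modified sampling numbers `ϱ*_m(F, ‖·‖)`: recovery by arbitrary methods mapping into a
subspace of dimension at most `m`, from samples at `m` points. -/
def sampNumStar {Ω : Type*} (nrm : (Ω → ℝ) → ℝ) (F : Set (Ω → ℝ)) (m : ℕ) : ℝ :=
  sInf {r : ℝ | ∃ (x : Fin m → Ω) (Y : Submodule ℝ (Ω → ℝ)), Module.finrank ℝ Y ≤ m ∧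
    ∃ T : (Fin m → ℝ) → Ω → ℝ, (∀ v, T v ∈ Y) ∧
    r = ⨆ f ∈ F, nrm (fun y => f y - T (fun j => f (x j)) y)}

/-- Kolmogorov width `d_N(F, ‖·‖_∞)` : infimum over `N`-dimensional subspaces of `C(Ω)` of the
worst-case best approximation error in the uniform norm. -/
def kolWidth {Ω : Type*} [TopologicalSpace Ω] (F : Set (Ω → ℝ)) (N : ℕ) : ℝ :=
  sInf {r : ℝ | ∃ X : Submodule ℝ (Ω → ℝ), Module.finrank ℝ X = N ∧
    (∀ u ∈ X, Continuous u) ∧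
    r = ⨆ f ∈ F, sInf ((fun u => supNorm (fun y => f y - u y)) '' (X : Set (Ω → ℝ)))}

end


theorem phi_pos {Φ : ℝ → ℝ} (hpre : IsPhiPrefun Φ) {q : ℝ} (hdec : DecQ Φ q)
    {t : ℝ} (ht : 0 < t) : 0 < Φ t := by
  rcases (hpre.nonneg t ht.le).lt_or_eq with h | h
  · exact h
  · exfalso
    obtain ⟨s, hs1, hs2⟩ := ((hpre.tendsto_atTop.eventually_ge_atTop 1).and
      (Filter.eventually_gt_atTop t)).exists
    have h1 := hdec t s ht hs2
    rw [← h, zero_div] at h1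
    have hsp : 0 < s ^ q := Real.rpow_pos_of_pos (ht.trans hs2) q
    have : 0 < Φ s / s ^ q := div_pos (by linarith) hsp
    linarith

theorem phi_mono {Φ : ℝ → ℝ} (hpre : IsPhiPrefun Φ) {s t : ℝ} (hs : 0 ≤ s) (hst : s ≤ t) :
    Φ s ≤ Φ t := hpre.mono (Set.mem_Ici.2 hs) (Set.mem_Ici.2 (hs.trans hst)) hst

theorem phi_scale {Φ : ℝ → ℝ} (hpre : IsPhiPrefun Φ) {a1 : ℝ} (ha1 : 1 ≤ a1)
    (hA1 : AIncP Φ 1 a1) {c t : ℝ} (hc : 1 ≤ c) (ht : 0 ≤ t) :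
    Φ t ≤ a1 / c * Φ (c * t) := by
  have hcp : 0 < c := by linarith
  rcases ht.eq_or_lt with h | h
  · simp [← h, hpre.map_zero]
  rcases hc.eq_or_lt with h' | h'
  · rw [← h']
    have := hpre.nonneg t ht
    simp only [div_one, one_mul]
    nlinarith
  · have h1 := hA1 t (c * t) h (by nlinarith)
    simp only [Real.rpow_one] at h1
    rw [div_le_iff₀ h] at h1
    calc Φ t ≤ _ := h1
      _ = _ := by field_simp

theorem phi_dec {Φ : ℝ → ℝ} (hpre : IsPhiPrefun Φ) {q : ℝ} (hdec : DecQ Φ q)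
    {c t : ℝ} (hc : 1 ≤ c) (ht : 0 ≤ t) : Φ (c * t) ≤ c ^ q * Φ t := by
  have hcp : 0 < c := by linarith
  rcases ht.eq_or_lt with h | h
  · simp [← h, hpre.map_zero]
  rcases hc.eq_or_lt with h' | h'
  · simp [← h']
  · have h1 := hdec t (c * t) h (by nlinarith)
    rw [Real.mul_rpow hcp.le ht] at h1
    have hcq : 0 < c ^ q := Real.rpow_pos_of_pos hcp q
    have htq : 0 < t ^ q := Real.rpow_pos_of_pos h q
    rw [div_le_div_iff₀ (by positivity) htq] at h1
    nlinarith

theorem phi_lip_aux {Φ : ℝ → ℝ} (hpre : IsPhiPrefun Φ) {a1 : ℝ} (ha1 : 1 ≤ a1)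
    (hA1 : AIncP Φ 1 a1) {q : ℝ} (hq : 1 ≤ q) (hdec : DecQ Φ q)
    {s t R : ℝ} (hs : 0 ≤ s) (hst : s ≤ t) (htR : t ≤ R) :
    Φ t - Φ s ≤ q * a1 * Φ R / R * (t - s) := by
  rcases hst.eq_or_lt with h | h
  · simp [h]
  have ht : 0 < t := by linarith
  have hR : 0 < R := by linarith
  have hR0 := hpre.nonneg R hR.le
  have ht0 := hpre.nonneg t ht.le
  have key : (1 - q * (1 - s / t)) * Φ t ≤ Φ s := by
    rcases hs.eq_or_lt with h' | h'
    · rw [← h', hpre.map_zero]; simp; nlinarith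
    · have h1 := hdec s t h' h
      have hsq : 0 < s ^ q := Real.rpow_pos_of_pos h' q
      have htq : 0 < t ^ q := Real.rpow_pos_of_pos ht q
      rw [div_le_div_iff₀ htq hsq] at h1
      have hb := one_add_mul_self_le_rpow_one_add (s := s / t - 1) (by
        have : 0 ≤ s / t := by positivity
        linarith) hq
      rw [show 1 + (s / t - 1) = s / t by ring, Real.div_rpow hs ht.le] at hb
      calc (1 - q * (1 - s / t)) * Φ t = (1 + q * (s / t - 1)) * Φ t := by ring
        _ ≤ (s ^ q / t ^ q) * Φ t := by gcongr
        _ = Φ t * s ^ q / t ^ q := by ring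
        _ ≤ Φ s := by rw [div_le_iff₀ htq]; exact h1
  have h2 : Φ t / t ≤ a1 * Φ R / R := by
    have := phi_scale hpre ha1 hA1 (c := R / t) (t := t) (by rw [le_div_iff₀ ht]; linarith) ht.le
    rw [div_mul_cancel₀ _ ht.ne'] at this
    rw [div_le_iff₀ ht]
    calc Φ t ≤ _ := this
      _ = _ := by field_simp
  calc Φ t - Φ s ≤ q * (1 - s / t) * Φ t := by linarith
    _ = q * (t - s) * (Φ t / t) := by field_simp
    _ ≤ q * (t - s) * (a1 * Φ R / R) := by
        apply mul_le_mul_of_nonneg_left h2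
        apply mul_nonneg <;> linarith
    _ = _ := by ring

theorem phi_lip {Φ : ℝ → ℝ} (hpre : IsPhiPrefun Φ) {a1 : ℝ} (ha1 : 1 ≤ a1)
    (hA1 : AIncP Φ 1 a1) {q : ℝ} (hq : 1 ≤ q) (hdec : DecQ Φ q)
    {x y R : ℝ} (hx : |x| ≤ R) (hy : |y| ≤ R) :
    abs (Φ |x| - Φ |y|) ≤ q * a1 * Φ R / R * |x - y| := by
  have hR : 0 ≤ R := (abs_nonneg x).trans hx
  have hR0 := hpre.nonneg R hR
  have hL : 0 ≤ q * a1 * Φ R / R := by positivity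
  rcases le_total |x| |y| with h | h
  · have h1 := phi_lip_aux hpre ha1 hA1 hq hdec (abs_nonneg x) h hy
    have h2 := phi_mono hpre (abs_nonneg x) h
    rw [abs_sub_comm, abs_of_nonneg (by linarith)]
    refine h1.trans (mul_le_mul_of_nonneg_left ?_ hL)
    rw [abs_sub_comm]; exact abs_sub_abs_le_abs_sub y x
  · have h1 := phi_lip_aux hpre ha1 hA1 hq hdec (abs_nonneg y) h hx
    have h2 := phi_mono hpre (abs_nonneg y) h
    rw [abs_of_nonneg (by linarith)]
    exact h1.trans (mul_le_mul_of_nonneg_left (abs_sub_abs_le_abs_sub x y) hL)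

theorem phi_lower {Φ : ℝ → ℝ} (hpre : IsPhiPrefun Φ) {a1 : ℝ} (ha1 : 1 ≤ a1)
    (hA1 : AIncP Φ 1 a1) {q : ℝ} (hdec : DecQ Φ q) {t : ℝ} (ht : 0 ≤ t) :
    t ≤ 1 + a1 / Φ 1 * Φ t := by
  have h1 := phi_pos hpre hdec one_pos
  have h0 := hpre.nonneg t ht
  rcases le_total t 1 with h | h
  · have : 0 ≤ a1 / Φ 1 * Φ t := by positivity
    linarith
  · have := phi_scale hpre ha1 hA1 h zero_le_one
    rw [mul_one] at this
    have h2 : t ≤ a1 / Φ 1 * Φ t := by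
      have h3 : Φ 1 * t ≤ a1 * Φ t := by
        calc Φ 1 * t ≤ a1 / t * Φ t * t := by gcongr
          _ = _ := by field_simp
      rw [div_mul_eq_mul_div, le_div_iff₀ h1]; linarith
    linarith

theorem phi_measurable {Φ : ℝ → ℝ} (hpre : IsPhiPrefun Φ) {Ω : Type*} [MeasurableSpace Ω]
    {f : Ω → ℝ} (hf : Measurable f) : Measurable (fun x => Φ |f x|) := by
  have hm : Monotone (fun t : ℝ => Φ (max 0 t)) := by
    intro s t hst
    exact phi_mono hpre (le_max_left _ _) (max_le_max le_rfl hst)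
  have := hm.measurable.comp (hf.abs)
  convert this using 2 with x
  simp

theorem phi_integrable {Φ : ℝ → ℝ} (hpre : IsPhiPrefun Φ) {Ω : Type*} [MeasurableSpace Ω]
    {μ : Measure Ω} [IsFiniteMeasure μ]
    {f : Ω → ℝ} (hf : Measurable f) {B : ℝ} (hB : ∀ x, |f x| ≤ B) :
    Integrable (fun x => Φ |f x|) μ := by
  refine Integrable.of_bound (phi_measurable hpre hf).aestronglyMeasurable (Φ B) ?_
  filter_upwards with x
  rw [Real.norm_eq_abs, abs_of_nonneg (hpre.nonneg _ (abs_nonneg _))]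
  exact phi_mono hpre (abs_nonneg _) (hB x)

/-! Choosing points one by one -/

theorem exists_points_prod {Ω : Type*} [MeasurableSpace Ω] (μ : Measure Ω)
    [IsProbabilityMeasure μ] {ι : Type*} [Fintype ι] (W : ι → Ω → ℝ)
    (hWi : ∀ i, Integrable (W i) μ) (hW0 : ∀ i x, 0 ≤ W i x) (w : ι → ℝ) 
    (hw : ∀ i, ∫ x, W i x ∂μ ≤ w i) :
    ∀ (m : ℕ) (c : ι → ℝ), (∀ i, 0 ≤ c i) →
      ∃ x : Fin m → Ω, ∑ i, c i * ∏ j, W i (x j) ≤ ∑ i, c i * w i ^ m := by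
  have hw0 : ∀ i, 0 ≤ w i := fun i => (integral_nonneg (hW0 i)).trans (hw i)
  intro m
  induction m with
  | zero => 
    intro c hc
    obtain ⟨x, -⟩ := exists_le_integral (μ := μ) (f := fun _ => (0:ℝ)) (by simp)
    exact ⟨fun _ => x, by simp⟩
  | succ m ih =>
    intro c hc
    obtain ⟨x0, hx0⟩ := exists_le_integral (μ := μ)
      (f := fun x => ∑ i, (c i * w i ^ m) * W i x)
      (integrable_finsetSum _ fun i _ => (hWi i).const_mul _)
    rw [integral_finsetSum _ (fun i _ => (hWi i).const_mul _)] at hx0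
    obtain ⟨x, hx⟩ := ih (fun i => c i * W i x0) (fun i => mul_nonneg (hc i) (hW0 i x0))
    refine ⟨Fin.cons x0 x, ?_⟩
    calc ∑ i, c i * ∏ j, W i ((Fin.cons x0 x : Fin (m+1) → Ω) j)
        = ∑ i, (c i * W i x0) * ∏ j, W i (x j) := by
          refine Finset.sum_congr rfl fun i _ => ?_
          rw [Fin.prod_univ_succ]; simp [mul_assoc]
      _ ≤ ∑ i, (c i * W i x0) * w i ^ m := hx
      _ = ∑ i, (c i * w i ^ m) * W i x0 := Finset.sum_congr rfl fun i _ => by ring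
      _ ≤ _ := hx0
      _ ≤ ∑ i, c i * w i ^ (m+1) := by
          refine Finset.sum_le_sum fun i _ => ?_
          rw [integral_const_mul, pow_succ, ← mul_assoc]
          exact mul_le_mul_of_nonneg_left (hw i) (mul_nonneg (hc i) (pow_nonneg (hw0 i) m))

theorem mgf_bound {Ω : Type*} [MeasurableSpace Ω] (μ : Measure Ω) [IsProbabilityMeasure μ]
    {Z : Ω → ℝ} (hZ : Measurable Z) {v l : ℝ} (hb : ∀ x, |Z x| ≤ v)
    (hv : ∫ x, Z x ^ 2 ∂μ ≤ v) (hl : |l| * v ≤ 1) :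
    Integrable (fun x => Real.exp (l * (Z x - ∫ y, Z y ∂μ))) μ ∧
    ∫ x, Real.exp (l * (Z x - ∫ y, Z y ∂μ)) ∂μ ≤ Real.exp (l ^ 2 * v) := by
  set e := ∫ y, Z y ∂μ with he
  have hlz : ∀ x, |l * Z x| ≤ 1 := fun x => by
    rw [abs_mul]; exact (mul_le_mul_of_nonneg_left (hb x) (abs_nonneg l)).trans hl
  have hZi : Integrable Z μ := Integrable.of_bound hZ.aestronglyMeasurable v (by
    filter_upwards with x using hb x)
  have hZ2 : Integrable (fun x => Z x ^ 2) μ :=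
    Integrable.of_bound (hZ.pow_const 2).aestronglyMeasurable (v^2) (by
      filter_upwards with x
      rw [norm_pow]
      exact pow_le_pow_left₀ (norm_nonneg _) (hb x) 2)
  have hEi : Integrable (fun x => Real.exp (l * Z x)) μ :=
    Integrable.of_bound (hZ.const_mul l).exp.aestronglyMeasurable (Real.exp 1) (by
      filter_upwards with x
      rw [Real.norm_eq_abs, Real.abs_exp]
      exact Real.exp_le_exp.2 ((le_abs_self _).trans (hlz x)))
  have hfe : (fun x => Real.exp (l * (Z x - e))) =
      fun x => Real.exp (-(l * e)) * Real.exp (l * Z x) := by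
    funext x; rw [← Real.exp_add]; ring_nf
  refine ⟨by rw [hfe]; exact hEi.const_mul _, ?_⟩
  rw [hfe, integral_const_mul]
  have h1 : ∫ x, Real.exp (l * Z x) ∂μ ≤ 1 + l * e + l ^ 2 * v := by
    calc ∫ x, Real.exp (l * Z x) ∂μ ≤ ∫ x, (1 + l * Z x + l^2 * Z x ^ 2) ∂μ := by
          refine integral_mono hEi (((integrable_const _).add (hZi.const_mul l)).add
            (hZ2.const_mul _)) fun x => ?_
          have := Real.abs_exp_sub_one_sub_id_le (hlz x)
          have := (abs_le.1 this).2
          show Real.exp (l * Z x) ≤ 1 + l * Z x + l^2 * Z x ^ 2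
          nlinarith
      _ = 1 + l * e + l ^ 2 * ∫ x, Z x ^ 2 ∂μ := by
          rw [integral_add, integral_add, integral_const_mul, integral_const_mul]
          · simp [he]
          · exact integrable_const _
          · exact hZi.const_mul l
          · exact (integrable_const _).add (hZi.const_mul l)
          · exact hZ2.const_mul _
      _ ≤ _ := by
        have := mul_le_mul_of_nonneg_left hv (sq_nonneg l)
        linarith
  calc Real.exp (-(l * e)) * ∫ x, Real.exp (l * Z x) ∂μ
      ≤ Real.exp (-(l * e)) * Real.exp (l * e + l^2 * v) := by
        refine mul_le_mul_of_nonneg_left (h1.trans ?_) (Real.exp_pos _).le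
        have := Real.add_one_le_exp (l * e + l ^ 2 * v)
        linarith
    _ = _ := by rw [← Real.exp_add]; ring_nf

/-- Bernstein inequality plus union bound, as an existence statement. -/
theorem exists_points {Ω : Type*} [MeasurableSpace Ω] (μ : Measure Ω) [IsProbabilityMeasure μ]
    {ι : Type*} [Fintype ι] (Z : ι → Ω → ℝ) (hZ : ∀ i, Measurable (Z i)) (v u : ι → ℝ)
    (hv0 : ∀ i, 0 < v i) (hu0 : ∀ i, 0 ≤ u i) (hu2 : ∀ i, u i ≤ 2)
    (hb : ∀ i x, |Z i x| ≤ v i) (hv : ∀ i, ∫ x, Z i x ^ 2 ∂μ ≤ v i) (m : ℕ)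
    (hsum : ∑ i, 2 * Real.exp (-(m * u i ^ 2 / (4 * v i))) < 1) :
    ∃ x : Fin m → Ω, ∀ i, |∑ j, Z i (x j) - m * ∫ y, Z i y ∂μ| ≤ m * u i := by
  let l : ι × Bool → ℝ := fun p => (if p.2 then 1 else -1) * (u p.1 / (2 * v p.1))
  have hl : ∀ p, |l p| = u p.1 / (2 * v p.1) := by
    rintro ⟨i, b⟩
    have h0 : 0 ≤ u i / (2 * v i) := div_nonneg (hu0 i) (by linarith [hv0 i])
    cases b <;> simp only [l] <;> simp [abs_of_nonneg h0]
  have hl2 : ∀ p, l p ^ 2 = (u p.1 / (2 * v p.1)) ^ 2 := fun p => by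
    rw [← sq_abs, hl]
  have hm := fun p : ι × Bool => mgf_bound μ (hZ p.1) (l := l p) (hb p.1) (hv p.1) (by
    rw [hl]
    have := hv0 p.1
    have := hu2 p.1
    calc u p.1 / (2 * v p.1) * v p.1 = u p.1 / 2 := by field_simp
      _ ≤ 1 := by linarith)
  obtain ⟨x, hx⟩ := exists_points_prod μ
    (fun p y => Real.exp (l p * (Z p.1 y - ∫ y, Z p.1 y ∂μ))) (fun p => (hm p).1)
    (fun p y => (Real.exp_pos _).le) (fun p => Real.exp (l p ^ 2 * v p.1)) (fun p => (hm p).2) m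
    (fun p => Real.exp (-(m * (u p.1 ^ 2 / (2 * v p.1))))) (fun p => (Real.exp_pos _).le)
  refine ⟨x, fun i => ?_⟩
  have hR : ∑ p : ι × Bool, Real.exp (-(m * (u p.1 ^ 2 / (2 * v p.1)))) *
      Real.exp (l p ^ 2 * v p.1) ^ m = ∑ i, 2 * Real.exp (-(m * u i ^ 2 / (4 * v i))) := by
    rw [Fintype.sum_prod_type]
    refine Finset.sum_congr rfl fun i _ => ?_
    have h : ∀ b, Real.exp (-(m * (u i ^ 2 / (2 * v i)))) *
      Real.exp (l (i, b) ^ 2 * v i) ^ m = Real.exp (-(m * u i ^ 2 / (4 * v i))) := by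
      intro b
      rw [← Real.exp_nat_mul, ← Real.exp_add, hl2]
      congr 1
      have := hv0 i
      field_simp
      ring
    simp only [h]
    simp
  rw [hR] at hx
  have hlt := hx.trans_lt hsum
  have hterm : ∀ b : Bool, l (i, b) * (∑ j, Z i (x j) - m * ∫ y, Z i y ∂μ) <
      m * (u i ^ 2 / (2 * v i)) := by
    intro b
    have h1 : Real.exp (-(m * (u i ^ 2 / (2 * v i)))) *
        ∏ j, Real.exp (l (i, b) * (Z i (x j) - ∫ y, Z i y ∂μ)) < 1 := by
      refine lt_of_le_of_lt ?_ hlt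
      exact Finset.single_le_sum (f := fun p : ι × Bool =>
        Real.exp (-(m * (u p.1 ^ 2 / (2 * v p.1)))) *
        ∏ j, Real.exp (l p * (Z p.1 (x j) - ∫ y, Z p.1 y ∂μ)))
        (fun p _ => mul_nonneg (Real.exp_pos _).le
          (Finset.prod_nonneg fun j _ => (Real.exp_pos _).le)) (Finset.mem_univ (i, b))
    rw [← Real.exp_sum, ← Real.exp_add, Real.exp_lt_one_iff, ← Finset.mul_sum,
      Finset.sum_sub_distrib] at h1
    simp at h1
    linarith
  have hvi := hv0 i
  rcases (hu0 i).eq_or_lt with h0 | h0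
  · have := hterm true
    simp [l, ← h0] at this
  · have h1 := hterm true
    have h2 := hterm false
    simp only [l] at h1 h2
    simp at h1 h2
    rw [abs_le]
    have e1 : m * (u i ^ 2 / (2 * v i)) = u i / (2 * v i) * (m * u i) := by ring
    have hp : 0 < u i / (2 * v i) := by positivity
    rw [e1] at h1 h2
    have h1 := (mul_lt_mul_iff_right₀ hp).1 h1
    constructor
    · by_contra hc
      push Not at hc
      have := mul_lt_mul_of_pos_left hc hp
      linarith
    · exact h1.le


theorem exists_cover_of_sep {E : Type*} (S : Set E) (r : E → E → Prop) (hrefl : ∀ x, r x x)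
    (hsymm : ∀ x y, r x y → r y x) (n : ℝ)
    (h : ∀ T : Finset E, ↑T ⊆ S → (∀ x ∈ T, ∀ y ∈ T, x ≠ y → ¬ r x y) → (T.card : ℝ) ≤ n) :
    ∃ T : Finset E, ↑T ⊆ S ∧ (T.card : ℝ) ≤ n ∧ ∀ x ∈ S, ∃ y ∈ T, r x y := by
  classical
  by_contra hcon
  push Not at hcon
  have hall : ∀ k : ℕ, ∃ T : Finset E, T.card = k ∧ ↑T ⊆ S ∧
      (∀ x ∈ T, ∀ y ∈ T, x ≠ y → ¬ r x y) := by
    intro k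
    induction k with
    | zero => exact ⟨∅, by simp⟩
    | succ k ih =>
      obtain ⟨T, hc, hS, hT⟩ := ih
      obtain ⟨x, hxS, hx⟩ := hcon T hS (h T hS hT)
      have hxT : x ∉ T := fun hxT => hx x hxT (hrefl x)
      refine ⟨insert x T, by rw [Finset.card_insert_of_notMem hxT, hc], ?_, ?_⟩
      · rw [Finset.coe_insert]; exact Set.insert_subset hxS hS
      · intro a ha b hb hab
        rcases Finset.mem_insert.1 ha with ha' | ha' <;>
          rcases Finset.mem_insert.1 hb with hb' | hb'
        · exact absurd (ha'.trans hb'.symm) hab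
        · rw [ha']; exact hx b hb'
        · rw [hb']; exact fun hr => hx a ha' (hsymm _ _ hr)
        · exact hT a ha' b hb' hab
  obtain ⟨k, hk⟩ := exists_nat_gt n
  obtain ⟨T, hc, hS, hT⟩ := hall k
  have := h T hS hT
  rw [hc] at this
  linarith

/-- internal covers from external covers -/
theorem exists_internal_cover {E : Type*} (S : Set E) (r r2 : E → E → Prop)
    (hr : ∀ x y z, r x z → r y z → r2 x y) (T : Finset E) (hT : ∀ x ∈ S, ∃ y ∈ T, r x y) :
    ∃ T' : Finset E, ↑T' ⊆ S ∧ T'.card ≤ T.card ∧ ∀ x ∈ S, ∃ y ∈ T', r2 x y := by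
  classical
  rcases S.eq_empty_or_nonempty with rfl | ⟨s0, hs0⟩
  · exact ⟨∅, by simp⟩
  let p : E → E := fun z => if h : ∃ x ∈ S, r x z then h.choose else s0
  refine ⟨T.image p, ?_, Finset.card_image_le, ?_⟩
  · intro x hx
    obtain ⟨z, hz, rfl⟩ := Finset.mem_image.1 (Finset.mem_coe.1 hx)
    simp only [p]
    split_ifs with h
    · exact h.choose_spec.1
    · exact hs0
  · intro x hx
    obtain ⟨z, hz, hxz⟩ := hT x hx
    have h : ∃ x ∈ S, r x z := ⟨x, hx, hxz⟩
    refine ⟨p z, Finset.mem_image_of_mem p hz, ?_⟩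
    simp only [p, dif_pos h]
    exact hr _ _ _ hxz h.choose_spec.2

theorem card_le_of_sep_ball {E : Type*} [NormedAddCommGroup E] [NormedSpace ℝ E]
    [FiniteDimensional ℝ E] (T : Finset E) {ρ η : ℝ} (hρ : 0 ≤ ρ) (hη : 0 < η)
    (hT : ∀ x ∈ T, ‖x‖ ≤ ρ) (hs : ∀ x ∈ T, ∀ y ∈ T, x ≠ y → η ≤ ‖x - y‖) :
    (T.card : ℝ) ≤ (1 + 2 * ρ / η) ^ Module.finrank ℝ E := by
  borelize E
  let μ : Measure E := Measure.addHaar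
  have hδ : 0 < η / 2 := by linarith
  have hr : 0 < ρ + η / 2 := by linarith
  have D : Set.PairwiseDisjoint (T : Set E) (fun c => Metric.ball (c : E) (η / 2)) := by
    rintro c hc d hd hcd
    apply Metric.ball_disjoint_ball
    rw [dist_eq_norm]
    have := hs c hc d hd hcd
    linarith
  have A_subset : (⋃ c ∈ T, Metric.ball (c : E) (η / 2)) ⊆ Metric.ball (0 : E) (ρ + η / 2) := by
    refine Set.iUnion₂_subset fun x hx => ?_
    apply Metric.ball_subset_ball'
    rw [dist_zero_right]
    linarith [hT x hx]
  have I : (T.card : ENNReal) * ENNReal.ofReal ((η / 2) ^ Module.finrank ℝ E) *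
      μ (Metric.ball 0 1) ≤
      ENNReal.ofReal ((ρ + η / 2) ^ Module.finrank ℝ E) * μ (Metric.ball 0 1) :=
    calc
      _ = μ (⋃ c ∈ T, Metric.ball (c : E) (η / 2)) := by
        rw [measure_biUnion_finset D fun c _ => measurableSet_ball]
        simp only [μ.addHaar_ball_of_pos _ hδ]
        simp only [Finset.sum_const, nsmul_eq_mul, mul_assoc]
      _ ≤ μ (Metric.ball (0 : E) (ρ + η / 2)) := measure_mono A_subset
      _ = _ := by simp only [μ.addHaar_ball_of_pos _ hr]
  have J : (T.card : ENNReal) * ENNReal.ofReal ((η / 2) ^ Module.finrank ℝ E) ≤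
      ENNReal.ofReal ((ρ + η / 2) ^ Module.finrank ℝ E) :=
    (ENNReal.mul_le_mul_iff_left (Metric.measure_ball_pos _ _ zero_lt_one).ne'
      measure_ball_lt_top.ne).1 I
  have K := ENNReal.toReal_le_of_le_ofReal (pow_nonneg hr.le _) J
  rw [ENNReal.toReal_mul, ENNReal.toReal_ofReal (by positivity), ENNReal.toReal_natCast] at K
  have e : (1 + 2 * ρ / η) = (ρ + η / 2) / (η / 2) := by field_simp; ring
  rw [e, div_pow, le_div_iff₀ (by positivity)]
  exact K

section gauss
open scoped RealInnerProductSpace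
variable {E : Type*} [NormedAddCommGroup E] [InnerProductSpace ℝ E] [FiniteDimensional ℝ E]
  [MeasurableSpace E] [BorelSpace E]

theorem gauss_integrable : Integrable (fun x : E => Real.exp (-(‖x‖ ^ 2 / 2))) := by
  have h := GaussianFourier.integrable_cexp_neg_mul_sq_norm_add (V := E) (b := (1 / 2 : ℂ))
    (by norm_num) 0 0
  have h2 := h.norm
  refine h2.congr ?_
  filter_upwards with x
  rw [Complex.norm_exp]
  congr 1
  simp
  norm_cast
  ring

theorem gauss_lin_integrable (a : E) :
    Integrable (fun x : E => Real.exp (-(‖x‖ ^ 2 / 2)) * Real.exp ⟪a, x⟫) ∧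
    ∫ x : E, Real.exp (-(‖x‖ ^ 2 / 2)) * Real.exp ⟪a, x⟫ =
      Real.exp (‖a‖ ^ 2 / 2) * ∫ x : E, Real.exp (-(‖x‖ ^ 2 / 2)) := by
  have e : (fun x : E => Real.exp (-(‖x‖ ^ 2 / 2)) * Real.exp ⟪a, x⟫) =
      fun x : E => Real.exp (‖a‖ ^ 2 / 2) * (fun z => Real.exp (-(‖z‖ ^ 2 / 2))) (x - a) := by
    funext x
    simp only
    rw [← Real.exp_add, ← Real.exp_add, @norm_sub_sq_real, real_inner_comm]
    ring_nf
  rw [e]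
  refine ⟨(gauss_integrable.comp_sub_right a).const_mul _, ?_⟩
  rw [integral_const_mul]
  congr 1
  exact integral_sub_right_eq_self (fun z : E => Real.exp (-(‖z‖ ^ 2 / 2))) a

theorem gauss_slab {Y : Type*} [Fintype Y] [Nonempty Y] (K : Y → E) {H : ℝ} (hH : 0 < H)
    (hK : ∀ y, ‖K y‖ ≤ H) {s : ℝ} (hs : s ^ 2 = 2 * H ^ 2 * Real.log (4 * Fintype.card Y))
    (hs0 : 0 ≤ s) :
    (∫ x : E, Real.exp (-(‖x‖ ^ 2 / 2))) / 2 ≤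
      ∫ x : E, Set.indicator {x : E | ∀ y, |⟪K y, x⟫| ≤ s}
        (fun x => Real.exp (-(‖x‖ ^ 2 / 2))) x := by
  set G : E → ℝ := fun x => Real.exp (-(‖x‖ ^ 2 / 2)) with hG
  set I := ∫ x, G x with hI
  have hI0 : 0 ≤ I := integral_nonneg fun x => (Real.exp_pos _).le
  set S : Set E := {x : E | ∀ y, |⟪K y, x⟫| ≤ s} with hS
  have hSm : MeasurableSet S := by
    have : S = ⋂ y, {x : E | |⟪K y, x⟫| ≤ s} := by ext; simp [hS]
    rw [this]
    exact MeasurableSet.iInter fun y =>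
      (isClosed_le (by fun_prop) continuous_const).measurableSet
  set t := s / H ^ 2 with ht
  have ht0 : 0 ≤ t := by positivity
  have hpt : ∀ x, G x ≤ S.indicator G x +
      ∑ y, Real.exp (-(t * s)) * (G x * Real.exp ⟪t • K y, x⟫ + G x * Real.exp ⟪-(t • K y), x⟫) := by
    intro x
    have hG0 : 0 < G x := Real.exp_pos _
    have hterm : ∀ y, 0 ≤ Real.exp (-(t * s)) *
        (G x * Real.exp ⟪t • K y, x⟫ + G x * Real.exp ⟪-(t • K y), x⟫) := fun y => by positivity
    by_cases hx : x ∈ S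
    · rw [Set.indicator_of_mem hx]
      linarith [Finset.sum_nonneg fun y (_ : y ∈ Finset.univ) => hterm y]
    · rw [Set.indicator_of_notMem hx, zero_add]
      simp only [hS, Set.mem_ofPred_eq, not_forall, not_le] at hx
      obtain ⟨y, hy⟩ := hx
      refine le_trans ?_ (Finset.single_le_sum (fun y _ => hterm y) (Finset.mem_univ y))
      rw [← mul_add, ← mul_assoc, mul_comm _ (G x), mul_assoc]
      refine le_mul_of_one_le_right hG0.le ?_
      rw [mul_add, ← Real.exp_add, ← Real.exp_add, inner_neg_left, real_inner_smul_left]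
      rcases le_abs'.1 hy.le with h | h
      · have : 1 ≤ Real.exp (-(t * s) + -(t * ⟪K y, x⟫)) := Real.one_le_exp (by nlinarith)
        linarith [Real.exp_pos (-(t * s) + (t * ⟪K y, x⟫))]
      · have : 1 ≤ Real.exp (-(t * s) + (t * ⟪K y, x⟫)) := Real.one_le_exp (by nlinarith)
        linarith [Real.exp_pos (-(t * s) + -(t * ⟪K y, x⟫))]
  have hindi : Integrable (S.indicator G) := gauss_integrable.indicator hSm
  have hyi : ∀ y, Integrable (fun x => Real.exp (-(t * s)) *
      (G x * Real.exp ⟪t • K y, x⟫ + G x * Real.exp ⟪-(t • K y), x⟫)) := fun y =>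
    ((gauss_lin_integrable _).1.add (gauss_lin_integrable _).1).const_mul _
  have h1 : I ≤ ∫ x, (S.indicator G x +
      ∑ y, Real.exp (-(t * s)) * (G x * Real.exp ⟪t • K y, x⟫ + G x * Real.exp ⟪-(t • K y), x⟫)) :=
    integral_mono gauss_integrable (hindi.add (integrable_finsetSum _ fun y _ => hyi y)) hpt
  rw [integral_add hindi (integrable_finsetSum _ fun y _ => hyi y),
    integral_finsetSum _ fun y _ => hyi y] at h1
  have h2 : ∀ y, ∫ x, Real.exp (-(t * s)) *
      (G x * Real.exp ⟪t • K y, x⟫ + G x * Real.exp ⟪-(t • K y), x⟫) ≤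
      I / (2 * Fintype.card Y) := by
    intro y
    rw [integral_const_mul, integral_add (gauss_lin_integrable _).1 (gauss_lin_integrable _).1,
      (gauss_lin_integrable _).2, (gauss_lin_integrable _).2, norm_neg, norm_smul,
      Real.norm_of_nonneg ht0]
    have hn : (t * ‖K y‖) ^ 2 / 2 ≤ t * s / 2 := by
      have : (t * ‖K y‖) ^ 2 ≤ (t * H) ^ 2 := by gcongr; exact hK y
      have e : (t * H) ^ 2 = t * s := by rw [ht]; field_simp
      linarith
    have hts : t * s = 2 * Real.log (4 * Fintype.card Y) := by
      rw [ht]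
      calc s / H ^ 2 * s = s ^ 2 / H ^ 2 := by ring
        _ = _ := by rw [hs]; field_simp
    have hM : (0:ℝ) < Fintype.card Y := by exact_mod_cast Fintype.card_pos
    calc _ = 2 * I * (Real.exp (-(t * s)) * Real.exp ((t * ‖K y‖) ^ 2 / 2)) := by
          rw [← hI]; ring
      _ ≤ 2 * I * (Real.exp (-(t * s)) * Real.exp (t * s / 2)) := by gcongr
      _ = 2 * I * Real.exp (- Real.log (4 * Fintype.card Y)) := by
          rw [← Real.exp_add, hts]; ring_nf
      _ = _ := by rw [Real.exp_neg, Real.exp_log (by positivity)]; field_simp; ring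
  have h3 : ∑ y : Y, I / (2 * Fintype.card Y) = I / 2 := by
    have hM : (0:ℝ) < Fintype.card Y := by exact_mod_cast Fintype.card_pos
    rw [Finset.sum_const, nsmul_eq_mul, Finset.card_univ]; field_simp
  have h4 := Finset.sum_le_sum fun y (_ : y ∈ Finset.univ) => h2 y
  rw [h3] at h4
  have : ∫ x, S.indicator G x = ∫ x, S.indicator (fun x => Real.exp (-(‖x‖ ^ 2 / 2))) x := rfl
  linarith

theorem gauss_shift {S : Set E} (hSm : MeasurableSet S) (hSs : ∀ x, -x ∈ S ↔ x ∈ S) (z : E) :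
    Real.exp (-(‖z‖ ^ 2 / 2)) * ∫ x : E, S.indicator (fun x => Real.exp (-(‖x‖ ^ 2 / 2))) x ≤
      ∫ x : E, S.indicator (fun _ => (1:ℝ)) (x - z) * Real.exp (-(‖x‖ ^ 2 / 2)) := by
  have e1 : ∫ x : E, S.indicator (fun _ => (1:ℝ)) (x - z) * Real.exp (-(‖x‖ ^ 2 / 2)) =
      ∫ x : E, S.indicator (fun x => Real.exp (-(‖x + z‖ ^ 2 / 2))) x := by
    rw [← integral_add_right_eq_self _ z]
    congr 1; funext x
    by_cases hx : x ∈ S <;> simp [hx]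
  have e2 : ∫ x : E, S.indicator (fun x => Real.exp (-(‖x + z‖ ^ 2 / 2))) x =
      ∫ x : E, S.indicator (fun x => Real.exp (-(‖x - z‖ ^ 2 / 2))) x := by
    rw [← integral_neg_eq_self]
    congr 1; funext x
    have : ‖-x + z‖ = ‖x - z‖ := by rw [← norm_neg]; congr 1; abel
    by_cases hx : x ∈ S
    · rw [Set.indicator_of_mem ((hSs x).2 hx), Set.indicator_of_mem hx, this]
    · rw [Set.indicator_of_notMem (fun h => hx ((hSs x).1 h)), Set.indicator_of_notMem hx]
  have i0 : Integrable (S.indicator (fun x : E => Real.exp (-(‖x‖ ^ 2 / 2)))) :=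
    gauss_integrable.indicator hSm
  have i1 : Integrable (S.indicator (fun x : E => Real.exp (-(‖x + z‖ ^ 2 / 2)))) :=
    (gauss_integrable.comp_add_right z).indicator hSm
  have i2 : Integrable (S.indicator (fun x : E => Real.exp (-(‖x - z‖ ^ 2 / 2)))) :=
    (gauss_integrable.comp_sub_right z).indicator hSm
  have key : ∫ x : E, 2 * (Real.exp (-(‖z‖ ^ 2 / 2)) *
        S.indicator (fun x => Real.exp (-(‖x‖ ^ 2 / 2))) x) ≤
      ∫ x : E, (S.indicator (fun x => Real.exp (-(‖x + z‖ ^ 2 / 2))) x +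
        S.indicator (fun x => Real.exp (-(‖x - z‖ ^ 2 / 2))) x) := by
    refine integral_mono ((i0.const_mul _).const_mul _) (i1.add i2) fun x => ?_
    by_cases hx : x ∈ S
    · simp only [Set.indicator_of_mem hx]
      rw [@norm_add_sq_real, @norm_sub_sq_real]
      have a1 : -((‖x‖ ^ 2 + 2 * ⟪x, z⟫ + ‖z‖ ^ 2) / 2) =
        (-(‖z‖ ^ 2 / 2)) + (-(‖x‖ ^ 2 / 2)) + (-⟪x, z⟫) := by ring
      have a2 : -((‖x‖ ^ 2 - 2 * ⟪x, z⟫ + ‖z‖ ^ 2) / 2) =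
        (-(‖z‖ ^ 2 / 2)) + (-(‖x‖ ^ 2 / 2)) + (⟪x, z⟫) := by ring
      rw [a1, a2, Real.exp_add, Real.exp_add, Real.exp_add _ ⟪x, z⟫, Real.exp_add, ← mul_add,
        mul_comm (2:ℝ)]
      refine mul_le_mul_of_nonneg_left ?_ (by positivity)
      have b1 := Real.add_one_le_exp ⟪x, z⟫
      have b2 := Real.add_one_le_exp (-⟪x, z⟫)
      linarith
    · simp only [Set.indicator_of_notMem hx]; simp
  rw [integral_const_mul, integral_const_mul, integral_add i1 i2, ← e2] at key
  rw [e1]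
  linarith

end gauss

section sudakov
open scoped RealInnerProductSpace
variable {E : Type*} [NormedAddCommGroup E] [InnerProductSpace ℝ E] [FiniteDimensional ℝ E]

/-- dual Sudakov -/
theorem dual_sudakov {Y : Type*} [Fintype Y] [Nonempty Y] (K : Y → E) {H : ℝ} (hH : 0 < H)
    (hK : ∀ y, ‖K y‖ ≤ H) (T : Finset E) {ρ η : ℝ} (hη : 0 < η)
    (hT : ∀ x ∈ T, ‖x‖ ≤ ρ) (hs : ∀ x ∈ T, ∀ z ∈ T, x ≠ z → ¬ ∀ y, |⟪K y, x - z⟫| ≤ η) :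
    (T.card : ℝ) ≤ 2 * Real.exp (4 * H ^ 2 * Real.log (4 * Fintype.card Y) * ρ ^ 2 / η ^ 2) := by
  borelize E
  have hM : (1:ℝ) ≤ Fintype.card Y := by exact_mod_cast Fintype.card_pos
  have hlog : 0 < Real.log (4 * Fintype.card Y) := Real.log_pos (by linarith)
  set s := Real.sqrt (2 * H ^ 2 * Real.log (4 * Fintype.card Y)) with hsdef
  have hs2 : s ^ 2 = 2 * H ^ 2 * Real.log (4 * Fintype.card Y) := Real.sq_sqrt (by positivity)
  have hspos : 0 < s := Real.sqrt_pos.2 (by positivity)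
  set l := 2 * s / η with hl
  have hlpos : 0 < l := by positivity
  have hslab := gauss_slab K hH hK hs2 hspos.le
  set S : Set E := {x : E | ∀ y, |⟪K y, x⟫| ≤ s} with hS
  have hSm : MeasurableSet S := by
    have : S = ⋂ y, {x : E | |⟪K y, x⟫| ≤ s} := by ext; simp [hS]
    rw [this]
    exact MeasurableSet.iInter fun y =>
      (isClosed_le (by fun_prop) continuous_const).measurableSet
  have hSs : ∀ x, -x ∈ S ↔ x ∈ S := by intro x; simp [hS]
  set I := ∫ x : E, Real.exp (-(‖x‖ ^ 2 / 2)) with hI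
  have hIpos : 0 < I := by
    have h := GaussianFourier.integral_rexp_neg_mul_sq_norm (V := E) (b := 1 / 2) (by norm_num)
    have e : I = ∫ v : E, Real.exp (-(1 / 2) * ‖v‖ ^ 2) := by
      rw [hI]; congr 1; funext x; congr 1; ring
    rw [e, h]; positivity
  have hIntg : ∀ z : E, Integrable (fun x : E =>
      S.indicator (fun _ => (1:ℝ)) (x - z) * Real.exp (-(‖x‖ ^ 2 / 2))) := by
    intro z
    have : (fun x : E => S.indicator (fun _ => (1:ℝ)) (x - z) * Real.exp (-(‖x‖ ^ 2 / 2))) =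
      ((fun x => x - z) ⁻¹' S).indicator (fun x => Real.exp (-(‖x‖ ^ 2 / 2))) := by
      funext x
      by_cases hx : x - z ∈ S <;> simp [Set.indicator, hx]
    rw [this]
    exact gauss_integrable.indicator ((measurable_sub_const z) hSm)
  have h1 : ∑ z ∈ T, ∫ x : E,
      S.indicator (fun _ => (1:ℝ)) (x - l • z) * Real.exp (-(‖x‖ ^ 2 / 2)) ≤ I := by
    rw [← integral_finsetSum _ fun z _ => hIntg (l • z)]
    refine integral_mono (integrable_finsetSum _ fun z _ => hIntg (l • z)) gauss_integrable ?_
    intro x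
    simp only
    rw [← Finset.sum_mul]
    refine mul_le_of_le_one_left (Real.exp_pos _).le ?_
    by_cases hex : ∃ z ∈ T, x - l • z ∈ S
    · obtain ⟨z, hz, hxz⟩ := hex
      rw [Finset.sum_eq_single_of_mem z hz]
      · simp [hxz]
      · intro w hw hwz
        apply Set.indicator_of_notMem
        intro hxw
        apply hs z hz w hw hwz.symm
        intro y
        have a := hxz y
        have b := hxw y
        have e : ⟪K y, x - l • w⟫ - ⟪K y, x - l • z⟫ = l * ⟪K y, z - w⟫ := by
          rw [← inner_sub_right, ← real_inner_smul_right]; congr 1; rw [smul_sub]; abel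
        have c : |l * ⟪K y, z - w⟫| ≤ 2 * s := by
          rw [← e]; exact (abs_sub _ _).trans (by linarith)
        rw [abs_mul, abs_of_pos hlpos, hl] at c
        rw [div_mul_eq_mul_div, div_le_iff₀ hη] at c
        exact le_of_mul_le_mul_left c (by positivity)
    · push Not at hex
      rw [Finset.sum_eq_zero]
      · norm_num
      · intro z hz
        exact Set.indicator_of_notMem (hex z hz) _
  have h2 : ∀ z ∈ T, Real.exp (-(l ^ 2 * ρ ^ 2 / 2)) * (I / 2) ≤ ∫ x : E,
      S.indicator (fun _ => (1:ℝ)) (x - l • z) * Real.exp (-(‖x‖ ^ 2 / 2)) := by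
    intro z hz
    refine le_trans ?_ (gauss_shift hSm hSs (l • z))
    refine mul_le_mul ?_ hslab (by positivity) (by positivity)
    apply Real.exp_le_exp.2
    rw [norm_smul, mul_pow, Real.norm_of_nonneg hlpos.le]
    have : ‖z‖ ^ 2 ≤ ρ ^ 2 := pow_le_pow_left₀ (norm_nonneg z) (hT z hz) 2
    have := mul_le_mul_of_nonneg_left this (sq_nonneg l)
    linarith
  have h3 := (Finset.sum_le_sum h2).trans h1
  rw [Finset.sum_const, nsmul_eq_mul] at h3
  have h4 : (T.card : ℝ) * Real.exp (-(l ^ 2 * ρ ^ 2 / 2)) ≤ 2 := by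
    by_contra hc
    push Not at hc
    nlinarith
  have h5 : 4 * H ^ 2 * Real.log (4 * Fintype.card Y) * ρ ^ 2 / η ^ 2 = l ^ 2 * ρ ^ 2 / 2 := by
    rw [hl, div_pow, mul_pow, hs2]; field_simp; ring
  rw [h5]
  rw [Real.exp_neg, ← div_eq_mul_inv, div_le_iff₀ (Real.exp_pos _)] at h4
  exact h4

end sudakov


section frame
open scoped RealInnerProductSpace
variable {E : Type*} [NormedAddCommGroup E] [InnerProductSpace ℝ E]
  {Y : Type*} [Fintype Y] [Nonempty Y]

theorem frame_norm_le {K : Y → E} {H : ℝ}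
    (hK : ∀ y, ‖K y‖ ≤ H)
    (hpar : ∀ e f : E, ⟪e, f⟫ = (∑ y, ⟪K y, e⟫ * ⟪K y, f⟫) / Fintype.card Y)
    {f : E} {A : ℝ} (hf : (∑ y, |⟪K y, f⟫|) / Fintype.card Y ≤ A) : ‖f‖ ≤ H * A := by
  have hM : (0:ℝ) < Fintype.card Y := by exact_mod_cast Fintype.card_pos
  obtain ⟨y0⟩ := ‹Nonempty Y›
  have hH : 0 ≤ H := (norm_nonneg _).trans (hK y0)
  have hA : 0 ≤ A := le_trans (by positivity) hf
  rcases (norm_nonneg f).eq_or_lt with h0 | h0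
  · rw [← h0]; positivity
  have h1 : ‖f‖ ^ 2 ≤ H * ‖f‖ * A := by
    rw [← real_inner_self_eq_norm_sq, hpar]
    calc (∑ y, ⟪K y, f⟫ * ⟪K y, f⟫) / Fintype.card Y
        ≤ (∑ y, H * ‖f‖ * |⟪K y, f⟫|) / Fintype.card Y := by
          refine div_le_div_of_nonneg_right (Finset.sum_le_sum fun y _ => ?_) hM.le
          rw [← abs_mul_abs_self]
          refine mul_le_mul_of_nonneg_right ?_ (abs_nonneg _)
          exact (abs_real_inner_le_norm _ _).trans (by gcongr; exact hK y)
      _ = H * ‖f‖ * ((∑ y, |⟪K y, f⟫|) / Fintype.card Y) := by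
          rw [← Finset.mul_sum, mul_div_assoc]
      _ ≤ _ := by gcongr
  nlinarith

theorem frame_sup_le {K : Y → E} {H : ℝ}
    (hK : ∀ y, ‖K y‖ ≤ H)
    (hpar : ∀ e f : E, ⟪e, f⟫ = (∑ y, ⟪K y, e⟫ * ⟪K y, f⟫) / Fintype.card Y)
    {f : E} {A : ℝ} (hf : (∑ y, |⟪K y, f⟫|) / Fintype.card Y ≤ A) (y : Y) :
    |⟪K y, f⟫| ≤ A * H ^ 2 := by
  have hH : 0 ≤ H := (norm_nonneg _).trans (hK y)
  calc |⟪K y, f⟫| ≤ ‖K y‖ * ‖f‖ := abs_real_inner_le_norm _ _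
    _ ≤ H * (H * A) := by gcongr; exact hK y; exact frame_norm_le hK hpar hf
    _ = _ := by ring

/-- the sign vectors of the empirical method -/
noncomputable def sgK (K : Y → E) (A : ℝ) (p : Y × Bool) : E :=
  (if p.2 then A else -A) • K p.1

theorem maurey {K : Y → E} {H : ℝ}
    (hK : ∀ y, ‖K y‖ ≤ H)
    (hpar : ∀ e f : E, ⟪e, f⟫ = (∑ y, ⟪K y, e⟫ * ⟪K y, f⟫) / Fintype.card Y)
    {f : E} {A : ℝ} (hf : (∑ y, |⟪K y, f⟫|) / Fintype.card Y ≤ A) (n : ℕ) :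
    ∃ s : Fin n → Y × Bool, ‖(n : ℝ) • f - ∑ i, sgK K A (s i)‖ ^ 2 ≤ n * (2 * H * A) ^ 2 := by
  have hM : (0:ℝ) < Fintype.card Y := by exact_mod_cast Fintype.card_pos
  have hA : 0 ≤ A := le_trans (by positivity) hf
  have hn := frame_norm_le hK hpar hf
  induction n with
  | zero => exact ⟨fun i => i.elim0, by simp⟩
  | succ n ih =>
    obtain ⟨s, hs⟩ := ih
    set e := (n : ℝ) • f - ∑ i, sgK K A (s i) with he
    obtain ⟨y0, hy0⟩ := Finite.exists_max (fun y => |⟪K y, e⟫|)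
    have hH : 0 ≤ H := (norm_nonneg _).trans (hK y0)
    have hex : ∃ b : Bool, ⟪e, sgK K A (y0, b)⟫ = A * |⟪K y0, e⟫| := by
      rcases le_total 0 ⟪K y0, e⟫ with h | h
      · refine ⟨true, ?_⟩
        rw [real_inner_comm]
        simp [sgK, real_inner_smul_left, abs_of_nonneg h]
      · refine ⟨false, ?_⟩
        rw [real_inner_comm]
        simp [sgK, real_inner_smul_left, abs_of_nonpos h]
    obtain ⟨b, hb⟩ := hex
    refine ⟨Fin.snoc s (y0, b), ?_⟩
    have e1 : ((n + 1 : ℕ) : ℝ) • f - ∑ i, sgK K A ((Fin.snoc s (y0, b) : Fin (n+1) → Y × Bool) i)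
        = e + (f - sgK K A (y0, b)) := by
      rw [Fin.sum_univ_castSucc]
      simp only [Fin.snoc_castSucc, Fin.snoc_last]
      rw [he]
      push_cast
      rw [add_smul, one_smul]
      abel
    have h1 : ⟪e, f⟫ ≤ A * |⟪K y0, e⟫| := by
      rw [hpar]
      calc (∑ y, ⟪K y, e⟫ * ⟪K y, f⟫) / Fintype.card Y
          ≤ (∑ y, |⟪K y0, e⟫| * |⟪K y, f⟫|) / Fintype.card Y := by
            refine div_le_div_of_nonneg_right (Finset.sum_le_sum fun y _ => ?_) hM.le
            refine (le_abs_self _).trans ?_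
            rw [abs_mul]
            exact mul_le_mul_of_nonneg_right (hy0 y) (abs_nonneg _)
        _ = |⟪K y0, e⟫| * ((∑ y, |⟪K y, f⟫|) / Fintype.card Y) := by
            rw [← Finset.mul_sum, mul_div_assoc]
        _ ≤ |⟪K y0, e⟫| * A := by gcongr
        _ = _ := mul_comm _ _
    have h2 : ‖f - sgK K A (y0, b)‖ ≤ 2 * H * A := by
      have h3 : ‖sgK K A (y0, b)‖ ≤ A * H := by
        have : ‖(if b then A else -A)‖ = A := by
          cases b <;> simp [abs_of_nonneg hA]
        simp only [sgK]
        rw [norm_smul, this]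
        gcongr
        exact hK y0
      have := norm_sub_le f (sgK K A (y0, b))
      linarith
    have h3 : ‖f - sgK K A (y0, b)‖ ^ 2 ≤ (2 * H * A) ^ 2 := pow_le_pow_left₀ (norm_nonneg _) h2 2
    rw [e1, @norm_add_sq_real, inner_sub_right, hb]
    push_cast
    linarith

theorem coarse_cover [FiniteDimensional ℝ E] {K : Y → E} {H : ℝ} (hH : 0 < H)
    (hK : ∀ y, ‖K y‖ ≤ H)
    (hpar : ∀ e f : E, ⟪e, f⟫ = (∑ y, ⟪K y, e⟫ * ⟪K y, f⟫) / Fintype.card Y)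
    {A : ℝ} (hA : 0 < A) (S : Set E)
    (hS : ∀ f ∈ S, (∑ y, |⟪K y, f⟫|) / Fintype.card Y ≤ A) (k : ℕ) :
    ∃ T : Finset E, ↑T ⊆ S ∧
      (T.card : ℝ) ≤ Real.exp (66 * 2 ^ k * Real.log (4 * Fintype.card Y)) ∧
      ∀ f ∈ S, ∃ g ∈ T, ∀ y, |⟪K y, f - g⟫| ≤ A * H ^ 2 / 2 ^ k := by
  classical
  have hM : (1:ℝ) ≤ Fintype.card Y := by exact_mod_cast Fintype.card_pos
  have hlog : 1 ≤ Real.log (4 * Fintype.card Y) := by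
    rw [Real.le_log_iff_exp_le (by positivity)]
    linarith [Real.exp_one_lt_d9]
  set n : ℕ := 2 ^ k with hn
  have hnpos : (0:ℝ) < n := by simp [hn]
  set ρ := Real.sqrt ((2 * H * A) ^ 2 / n) with hρ
  have hρ2 : ρ ^ 2 = (2 * H * A) ^ 2 / n := Real.sq_sqrt (by positivity)
  set η := A * H ^ 2 / 2 ^ k / 2 with hη
  have hηpos : 0 < η := by positivity
  obtain ⟨Tb, -, hTbc, hTb⟩ := exists_cover_of_sep (Metric.closedBall (0:E) ρ)
    (fun x z => ∀ y, |⟪K y, x - z⟫| ≤ η) (by intro x y; simp [hηpos.le])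
    (by intro x z h y; rw [← neg_sub, inner_neg_right, abs_neg]; exact h y)
    _ (fun T hT hs => dual_sudakov K hH hK T hηpos
      (fun x hx => by simpa using hT (Finset.mem_coe.2 hx)) hs)
  let Ta : Finset E := Finset.univ.image
    (fun s : Fin n → Y × Bool => (n : ℝ)⁻¹ • ∑ i, sgK K A (s i))
  have hTac : (Ta.card : ℝ) ≤ (2 * Fintype.card Y) ^ n := by
    have : Ta.card ≤ (2 * Fintype.card Y) ^ n := by
      refine Finset.card_image_le.trans ?_
      simp [mul_comm]
    exact_mod_cast this
  let T0 : Finset E := Finset.image₂ (· + ·) Ta Tb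
  have hT0 : ∀ f ∈ S, ∃ g ∈ T0, ∀ y, |⟪K y, f - g⟫| ≤ η := by
    intro f hf
    obtain ⟨s, hs⟩ := maurey hK hpar (hS f hf) n
    have hmem : f - (n : ℝ)⁻¹ • ∑ i, sgK K A (s i) ∈ Metric.closedBall (0:E) ρ := by
      rw [mem_closedBall_zero_iff]
      apply Real.le_sqrt_of_sq_le
      have : f - (n : ℝ)⁻¹ • ∑ i, sgK K A (s i) =
          (n : ℝ)⁻¹ • ((n : ℝ) • f - ∑ i, sgK K A (s i)) := by
        rw [smul_sub, smul_smul, inv_mul_cancel₀ hnpos.ne', one_smul]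
      rw [this, norm_smul, mul_pow, Real.norm_of_nonneg (by positivity)]
      calc (n:ℝ)⁻¹ ^ 2 * ‖(n : ℝ) • f - ∑ i, sgK K A (s i)‖ ^ 2
          ≤ (n:ℝ)⁻¹ ^ 2 * (n * (2 * H * A) ^ 2) := by gcongr
        _ = _ := by field_simp
    obtain ⟨t, ht, htt⟩ := hTb _ hmem
    refine ⟨_, Finset.mem_image₂_of_mem (Finset.mem_image_of_mem _ (Finset.mem_univ s)) ht, ?_⟩
    intro y
    have := htt y
    rwa [sub_sub] at this
  obtain ⟨T, hTS, hTc, hT⟩ := exists_internal_cover S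
    (fun x z => ∀ y, |⟪K y, x - z⟫| ≤ η) (fun x z => ∀ y, |⟪K y, x - z⟫| ≤ A * H ^ 2 / 2 ^ k)
    (by
      intro x y z h1 h2 w
      have e : ⟪K w, x - y⟫ = ⟪K w, x - z⟫ - ⟪K w, y - z⟫ := by
        rw [← inner_sub_right]; congr 1; abel
      rw [e]
      have := h1 w
      have := h2 w
      exact (abs_sub _ _).trans (by linarith)) T0 hT0
  refine ⟨T, hTS, ?_, hT⟩
  have hexp : 4 * H ^ 2 * Real.log (4 * Fintype.card Y) * ρ ^ 2 / η ^ 2 =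
      64 * n * Real.log (4 * Fintype.card Y) := by
    rw [hρ2, hη]
    have : (n:ℝ) = 2 ^ k := by simp [hn]
    rw [this]
    field_simp
    ring
  rw [hexp] at hTbc
  have hcast : (n:ℝ) = 2 ^ k := by simp [hn]
  rw [← hcast]
  have hn1 : (1:ℝ) ≤ n := by rw [hcast]; exact one_le_pow₀ (by norm_num)
  calc (T.card : ℝ) ≤ T0.card := by exact_mod_cast hTc
    _ ≤ (Ta.card : ℝ) * Tb.card := by exact_mod_cast Finset.card_image₂_le _ _ _
    _ ≤ (2 * Fintype.card Y) ^ n * (2 * Real.exp (64 * n * Real.log (4 * Fintype.card Y))) := by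
        exact mul_le_mul hTac hTbc (Nat.cast_nonneg _) (by positivity)
    _ ≤ (4 * Fintype.card Y) ^ n * (Real.exp 1 * Real.exp (64 * n * Real.log (4 * Fintype.card Y))) := by
        gcongr
        · norm_num
        · linarith [Real.exp_one_gt_d9]
    _ = Real.exp (n * Real.log (4 * Fintype.card Y) +
        (1 + 64 * n * Real.log (4 * Fintype.card Y))) := by
        rw [Real.exp_add, Real.exp_add, Real.exp_nat_mul, Real.exp_log (by positivity)]
    _ ≤ _ := by
        apply Real.exp_le_exp.2
        nlinarith

theorem fine_cover [FiniteDimensional ℝ E] {K : Y → E} {H : ℝ} (hH : 0 < H)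
    (hK : ∀ y, ‖K y‖ ≤ H)
    (hpar : ∀ e f : E, ⟪e, f⟫ = (∑ y, ⟪K y, e⟫ * ⟪K y, f⟫) / Fintype.card Y)
    {A : ℝ} (hA : 0 < A) (S : Set E)
    (hS : ∀ f ∈ S, (∑ y, |⟪K y, f⟫|) / Fintype.card Y ≤ A) (k : ℕ) {N : ℕ}
    (hN : Module.finrank ℝ E ≤ N) :
    ∃ T : Finset E, ↑T ⊆ S ∧
      (T.card : ℝ) ≤ Real.exp (N * (k + 2)) ∧
      ∀ f ∈ S, ∃ g ∈ T, ∀ y, |⟪K y, f - g⟫| ≤ A * H ^ 2 / 2 ^ k := by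
  refine exists_cover_of_sep S (fun x z => ∀ y, |⟪K y, x - z⟫| ≤ A * H ^ 2 / 2 ^ k)
    (by intro x y; simp; positivity)
    (by intro x z h y; rw [← neg_sub, inner_neg_right, abs_neg]; exact h y) _ ?_
  intro T hT hs
  have h1 := card_le_of_sep_ball T (ρ := H * A) (η := H * A / 2 ^ k) (by positivity) (by positivity)
    (fun x hx => frame_norm_le hK hpar (hS x (hT hx))) (by
      intro x hx z hz hxz
      have := hs x hx z hz hxz
      push Not at this
      obtain ⟨y, hy⟩ := this
      have h2 : |⟪K y, x - z⟫| ≤ H * ‖x - z‖ :=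
        (abs_real_inner_le_norm _ _).trans (by gcongr; exact hK y)
      have h3 : H * (H * A / 2 ^ k) < H * ‖x - z‖ := by
        calc H * (H * A / 2 ^ k) = A * H ^ 2 / 2 ^ k := by ring
          _ < _ := hy.trans_le h2
      exact (lt_of_mul_lt_mul_left h3 hH.le).le)
  have e : 2 * (H * A) / (H * A / 2 ^ k) = 2 * 2 ^ k := by field_simp
  rw [e] at h1
  have h2k : (1:ℝ) ≤ 2 ^ k := one_le_pow₀ (by norm_num)
  calc (T.card : ℝ) ≤ _ := h1
    _ ≤ (1 + 2 * 2 ^ k) ^ N := pow_le_pow_right₀ (by linarith) hN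
    _ ≤ (2 ^ (k + 2)) ^ N := by
        gcongr
        rw [pow_add]; linarith
    _ ≤ (Real.exp 1 ^ (k + 2)) ^ N := by
        gcongr
        linarith [Real.exp_one_gt_d9]
    _ = _ := by
        rw [← Real.exp_nat_mul, ← Real.exp_nat_mul]; push_cast; ring_nf

/-- dimension bound -/
theorem frame_dim [FiniteDimensional ℝ E] {K : Y → E} {H : ℝ}
    (hK : ∀ y, ‖K y‖ ≤ H)
    (hpar : ∀ e f : E, ⟪e, f⟫ = (∑ y, ⟪K y, e⟫ * ⟪K y, f⟫) / Fintype.card Y) :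
    (Module.finrank ℝ E : ℝ) ≤ H ^ 2 := by
  have hM : (0:ℝ) < Fintype.card Y := by exact_mod_cast Fintype.card_pos
  let b := stdOrthonormalBasis ℝ E
  calc (Module.finrank ℝ E : ℝ) = ∑ i, ⟪b i, b i⟫ := by
        simp
    _ = ∑ i, (∑ y, ⟪K y, b i⟫ * ⟪K y, b i⟫) / Fintype.card Y :=
        Finset.sum_congr rfl fun i _ => hpar _ _
    _ = (∑ y, ∑ i, ⟪K y, b i⟫ * ⟪b i, K y⟫) / Fintype.card Y := by
        rw [← Finset.sum_div, Finset.sum_comm]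
        simp only [real_inner_comm]
    _ = (∑ y, ‖K y‖ ^ 2) / Fintype.card Y := by
        simp only [b.sum_inner_mul_inner, real_inner_self_eq_norm_sq]
    _ ≤ (∑ y : Y, H ^ 2) / Fintype.card Y := by
        gcongr with y
        exact hK y
    _ = H ^ 2 := by
        rw [Finset.sum_const, nsmul_eq_mul, Finset.card_univ]; field_simp

end frame


/-- Generic finite chaining over a finite uniform probability space. -/
theorem chaining {E Y : Type*} [Fintype Y] [Nonempty Y] (F : E → Y → ℝ) (S : Set E)
    (T : ℕ → Finset E) {L V : ℝ} (hL : 0 < L) (hV : 1 ≤ V)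
    (hF0 : ∀ f y, 0 ≤ F f y)
    (hFV : ∀ f ∈ S, (∑ y, F f y) / Fintype.card Y ≤ V)
    (hTS : ∀ k, ∀ g ∈ T k, g ∈ S)
    (hT0 : ∀ g ∈ T 0, ∀ y, F g y = 0)
    (hT : ∀ k, ∀ f ∈ S, ∃ g ∈ T k, ∀ y, |F f y - F g y| ≤ L / 2 ^ k)
    (h u : ℕ → ℝ) (hcard : ∀ k, ((T k).card : ℝ) ≤ Real.exp (h k))
    (hu0 : ∀ k, 0 ≤ u k) (hu2 : ∀ k, u k ≤ 2) (m K : ℕ)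
    (hm : ∀ k, h k + h (k + 1) + (k + 2) ≤ m * u k ^ 2 * 2 ^ k / (16 * V * L)) :
    ∃ x : Fin m → Y, ∀ f ∈ S,
      |∑ j, F f (x j) - m * ((∑ y, F f y) / Fintype.card Y)| ≤
        m * ((∑ k ∈ Finset.range K, u k) + 2 * L / 2 ^ K) := by
  classical
  have hM : (0:ℝ) < Fintype.card Y := by exact_mod_cast Fintype.card_pos
  let _ : MeasurableSpace Y := ⊤
  have : MeasurableSingletonClass Y := ⟨fun _ => trivial⟩
  let μ : Measure Y := (PMF.uniformOfFintype Y).toMeasure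
  have hIntg : ∀ g : Y → ℝ, ∫ y, g y ∂μ = (∑ y, g y) / Fintype.card Y := by
    intro g
    rw [PMF.integral_eq_sum, Finset.sum_div]
    refine Finset.sum_congr rfl fun y _ => ?_
    simp [PMF.uniformOfFintype_apply]
    ring
  let ι := Σ k : Fin K, (T (k + 1)) × (T k)
  let Z : ι → Y → ℝ := fun i y =>
    if ∀ y, |F i.2.1 y - F i.2.2 y| ≤ 2 * L / 2 ^ (i.1 : ℕ) then F i.2.1 y - F i.2.2 y else 0
  let v : ι → ℝ := fun i => 4 * V * L / 2 ^ (i.1 : ℕ)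
  have hZb : ∀ i y, |Z i y| ≤ 2 * L / 2 ^ (i.1 : ℕ) := by
    intro i y
    simp only [Z]
    split_ifs with hi
    · exact hi y
    · simp; positivity
  have hZ1 : ∀ i y, |Z i y| ≤ F i.2.1 y + F i.2.2 y := by
    intro i y
    have h1 := hF0 i.2.1 y
    have h2 := hF0 i.2.2 y
    simp only [Z]
    split_ifs with hi
    · rw [abs_le]; constructor <;> linarith
    · simp; linarith
  obtain ⟨x, hx⟩ := exists_points μ Z (fun i => measurable_from_top) v (fun i => u i.1)
    (fun i => by simp only [v]; positivity) (fun i => hu0 _) (fun i => hu2 _)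
    (fun i y => by
      refine (hZb i y).trans ?_
      simp only [v]
      gcongr
      nlinarith)
    (fun i => by
      rw [hIntg]
      calc (∑ y, Z i y ^ 2) / Fintype.card Y
          ≤ (∑ y, 2 * L / 2 ^ (i.1 : ℕ) * (F i.2.1 y + F i.2.2 y)) / Fintype.card Y := by
            refine div_le_div_of_nonneg_right (Finset.sum_le_sum fun y _ => ?_) hM.le
            rw [← sq_abs, sq]
            exact mul_le_mul (hZb i y) (hZ1 i y) (abs_nonneg _) (by positivity)
        _ = 2 * L / 2 ^ (i.1 : ℕ) * ((∑ y, F i.2.1 y) / Fintype.card Y +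
              (∑ y, F i.2.2 y) / Fintype.card Y) := by
            rw [← Finset.mul_sum, Finset.sum_add_distrib]; ring
        _ ≤ 2 * L / 2 ^ (i.1 : ℕ) * (V + V) := by
            gcongr
            · exact hFV _ (hTS _ _ i.2.1.2)
            · exact hFV _ (hTS _ _ i.2.2.2)
        _ = v i := by simp only [v]; ring)
    m (by
      have hk : ∀ k : Fin K, ∑ p : (T (k + 1)) × (T k),
          2 * Real.exp (-(m * u k ^ 2 / (4 * (4 * V * L / 2 ^ (k : ℕ))))) ≤ (1/2 : ℝ) ^ ((k : ℕ) + 1) := by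
        intro k
        rw [Finset.sum_const, nsmul_eq_mul, Finset.card_univ, Fintype.card_prod,
          Fintype.card_coe, Fintype.card_coe]
        have e1 : m * u k ^ 2 / (4 * (4 * V * L / 2 ^ (k : ℕ))) = m * u k ^ 2 * 2 ^ (k : ℕ) / (16 * V * L) := by
          field_simp; norm_num
        rw [e1]
        have h1 := hm k
        push_cast
        calc (((T (k + 1)).card : ℝ) * (T k).card) * (2 * Real.exp (-(m * u k ^ 2 * 2 ^ (k : ℕ) / (16 * V * L))))
            ≤ (Real.exp (h (k + 1)) * Real.exp (h k)) *
              (2 * Real.exp (-(h k + h (k + 1) + ((k : ℕ) + 2)))) := by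
              gcongr
              · exact hcard _
              · exact hcard _
          _ = 2 * Real.exp (-1) ^ ((k : ℕ) + 2) := by
              rw [← Real.exp_nat_mul, ← Real.exp_add, mul_left_comm, ← Real.exp_add]
              congr 2
              push_cast
              ring
          _ ≤ 2 * (1/2 : ℝ) ^ ((k : ℕ) + 2) := by
              gcongr
              rw [Real.exp_neg]
              rw [one_div]
              gcongr
              linarith [Real.exp_one_gt_d9]
          _ = _ := by ring
      have hs : ∀ K : ℕ, ∑ k ∈ Finset.range K, (1/2 : ℝ) ^ (k + 1) = 1 - (1/2) ^ K := by
        intro K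
        induction K with
        | zero => simp
        | succ n ih => rw [Finset.sum_range_succ, ih]; ring
      rw [Fintype.sum_sigma]
      refine (Finset.sum_le_sum fun k _ => hk k).trans_lt ?_
      rw [Fin.sum_univ_eq_sum_range (fun k => (1/2 : ℝ) ^ (k + 1)), hs]
      have : (0:ℝ) < (1/2) ^ K := by positivity
      linarith)
  refine ⟨x, fun f hf => ?_⟩
  choose g hg hgf using fun k => hT k f hf
  let D : (Y → ℝ) → ℝ := fun w => ∑ j, w (x j) - m * ((∑ y, w y) / Fintype.card Y)
  have hstep : ∀ k < K, |D (fun y => F (g (k+1)) y - F (g k) y)| ≤ m * u k := by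
    intro k hk
    have := hx ⟨⟨k, hk⟩, ⟨⟨g (k+1), hg _⟩, ⟨g k, hg _⟩⟩⟩
    have hc : ∀ y, |F (g (k+1)) y - F (g k) y| ≤ 2 * L / 2 ^ k := by
      intro y
      have h1 := hgf k y
      have h2 := hgf (k+1) y
      have h3 : L / 2 ^ (k+1) ≤ L / 2 ^ k := by
        gcongr
        · norm_num
        · omega
      have h4 : 2 * L / 2 ^ k = L / 2 ^ k + L / 2 ^ k := by ring
      rw [abs_le] at *
      rw [h4]
      constructor <;> linarith [h1.1, h1.2, h2.1, h2.2]
    rw [hIntg] at this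
    simp only [Z, if_pos hc] at this
    exact this
  have hchain : ∀ k ≤ K, |D (F (g k))| ≤ m * ∑ i ∈ Finset.range k, u i := by
    intro k
    induction k with
    | zero =>
      intro _
      have : ∀ y, F (g 0) y = 0 := hT0 _ (hg 0)
      simp [D, this]
    | succ k ih =>
      intro hk
      have e : D (F (g (k+1))) = D (F (g k)) + D (fun y => F (g (k+1)) y - F (g k) y) := by
        simp only [D, Finset.sum_sub_distrib]; ring
      rw [e, Finset.sum_range_succ, mul_add]
      exact (abs_add_le _ _).trans (add_le_add (ih (by omega)) (hstep k (by omega)))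
  have hlast : |D (fun y => F f y - F (g K) y)| ≤ m * (2 * L / 2 ^ K) := by
    have h1 : |∑ j, (F f (x j) - F (g K) (x j))| ≤ m * (L / 2 ^ K) := by
      refine (Finset.abs_sum_le_sum_abs _ _).trans ?_
      refine (Finset.sum_le_sum fun j _ => hgf K (x j)).trans ?_
      simp
    have h2 : |(∑ y, (F f y - F (g K) y)) / Fintype.card Y| ≤ L / 2 ^ K := by
      rw [abs_div, abs_of_pos hM, div_le_iff₀ hM]
      refine (Finset.abs_sum_le_sum_abs _ _).trans ?_
      refine (Finset.sum_le_sum fun y _ => hgf K y).trans ?_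
      simp [mul_comm]
    have hm0 : (0:ℝ) ≤ m := Nat.cast_nonneg _
    calc _ ≤ _ := abs_sub _ _
      _ ≤ m * (L / 2 ^ K) + m * (L / 2 ^ K) := by
        rw [abs_mul, abs_of_nonneg hm0]
        exact add_le_add h1 (by gcongr)
      _ = _ := by ring
  have e : D (F f) = D (F (g K)) + D (fun y => F f y - F (g K) y) := by
    simp only [D, Finset.sum_sub_distrib]; ring
  change |D (F f)| ≤ _
  rw [e, mul_add]
  exact (abs_add_le _ _).trans (add_le_add (hchain K le_rfl) hlast)

/-- numeric inequalities of the chaining argument -/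
theorem chain_num {N : ℕ} (hN : 1 ≤ N) {ε G Lg : ℝ} (hε : 0 < ε) (hε1 : ε ≤ 1) (hG : 0 < G)
    (hLg : 1 ≤ Lg) (m : ℕ)
    (hm : 70000 * G * ε⁻¹ ^ 2 * ((Nat.log 2 N : ℝ) + 1) ^ 2 * Lg ≤ m) (h : ℕ → ℝ)
    (hc : ∀ k, h k ≤ 66 * 2 ^ k * Lg) (hf : ∀ k, h k ≤ N * (k + 2)) :
    ∃ u : ℕ → ℝ, (∀ k, 0 ≤ u k) ∧ (∀ k, u k ≤ 2) ∧
      (∀ k, h k + h (k + 1) + (k + 2) ≤ m * u k ^ 2 * 2 ^ k / (16 * G)) ∧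
      ∀ K₀, ∃ K, K₀ ≤ K ∧ ∑ k ∈ Finset.range K, u k ≤ 3 / 4 * ε := by
  set k0 := Nat.log 2 N with hk0
  set l : ℝ := (k0 : ℝ) + 1 with hl
  have hl1 : 1 ≤ l := by simp [hl]
  have hNk : (N : ℝ) ≤ 2 * 2 ^ k0 := by
    have := (Nat.lt_pow_succ_log_self (b := 2) one_lt_two N).le
    have : (N : ℝ) ≤ 2 ^ (k0 + 1) := by exact_mod_cast this
    rwa [pow_succ, mul_comm] at this
  have hm' : 70000 * (l ^ 2 * Lg) ≤ m * ε ^ 2 / G := by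
    rw [le_div_iff₀ hG]
    calc 70000 * (l ^ 2 * Lg) * G = (70000 * G * ε⁻¹ ^ 2 * l ^ 2 * Lg) * ε ^ 2 := by
          field_simp
      _ ≤ _ := by gcongr
  have hk2 : ∀ k : ℕ, (k : ℝ) + 1 ≤ 2 ^ k := by
    intro k
    exact_mod_cast (Nat.lt_two_pow_self : k < 2 ^ k)
  refine ⟨fun k => if k < k0 then ε / (4 * l) else ε / 8 * (3/4) ^ (k - k0), ?_, ?_, ?_, ?_⟩
  · intro k; dsimp only; split_ifs <;> positivity
  · intro k
    dsimp only
    split_ifs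
    · rw [div_le_iff₀ (by positivity)]; nlinarith
    · have : ((3:ℝ)/4) ^ (k - k0) ≤ 1 := pow_le_one₀ (by norm_num) (by norm_num)
      nlinarith
  · intro k
    dsimp only
    split_ifs with hk
    · have e : m * (ε / (4 * l)) ^ 2 * 2 ^ k / (16 * G) = (m * ε ^ 2 / G) / (256 * l ^ 2) * 2 ^ k := by
        field_simp; norm_num; try ring
      rw [e]
      have h1 : 70000 / 256 * Lg ≤ (m * ε ^ 2 / G) / (256 * l ^ 2) := by
        rw [le_div_iff₀ (by positivity)]
        linarith
      have h2 := hc k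
      have h3 := hc (k + 1)
      rw [pow_succ] at h3
      have h4 := hk2 k
      have h5 : (1:ℝ) ≤ 2 ^ k := one_le_pow₀ (by norm_num)
      have h6 : (2:ℝ) ^ k ≤ 2 ^ k * Lg := by nlinarith
      have h7 : 70000 / 256 * Lg * 2 ^ k ≤ (m * ε ^ 2 / G) / (256 * l ^ 2) * 2 ^ k := by gcongr
      nlinarith
    · obtain ⟨j, rfl⟩ := Nat.exists_eq_add_of_le (not_lt.1 hk)
      rw [Nat.add_sub_cancel_left]
      have e : m * (ε / 8 * (3/4) ^ j) ^ 2 * 2 ^ (k0 + j) / (16 * G) =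
          (m * ε ^ 2 / G) / 1024 * 2 ^ k0 * (9/8) ^ j := by
        have : ((9:ℝ)/8) ^ j = ((3/4) ^ j) ^ 2 * 2 ^ j := by
          rw [← pow_mul, mul_comm j 2, pow_mul, ← mul_pow]; norm_num
        rw [this, pow_add]
        field_simp; norm_num; try ring
      rw [e]
      have h1 : 68 * l ≤ (m * ε ^ 2 / G) / 1024 := by
        have : l ≤ l ^ 2 * Lg := by nlinarith
        linarith
      have h2 := hf (k0 + j)
      have h3 := hf (k0 + j + 1)
      push_cast at h2 h3 ⊢
      have hb : 1 + (j:ℝ) * (1/8) ≤ (9/8) ^ j := by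
        have := one_add_mul_le_pow (a := (1/8:ℝ)) (by norm_num) j
        norm_num at this ⊢; exact this
      have h5 : (1:ℝ) ≤ 2 ^ k0 := one_le_pow₀ (by norm_num)
      have hj : (0:ℝ) ≤ j := Nat.cast_nonneg _
      have hk : (0:ℝ) ≤ k0 := Nat.cast_nonneg _
      have h6 : (N:ℝ) * (k0 + j + 2) ≤ 2 * 2 ^ k0 * (k0 + j + 3) := by
        refine mul_le_mul hNk (by linarith) (by positivity) (by positivity)
      have h7 : (N:ℝ) * (k0 + j + 1 + 2) ≤ 2 * 2 ^ k0 * (k0 + j + 3) := by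
        refine mul_le_mul hNk (by linarith) (by positivity) (by positivity)
      have h8 : (k0 + j + 2 : ℝ) ≤ 2 ^ k0 * (k0 + j + 3) := by nlinarith
      calc _ ≤ 2 ^ k0 * (5 * (k0 + j + 3 : ℝ)) := by linarith
        _ ≤ 2 ^ k0 * (68 * l * (1 + (j:ℝ) * (1/8))) := by
            refine mul_le_mul_of_nonneg_left ?_ (by positivity)
            rw [hl]; nlinarith [mul_nonneg hk hj]
        _ ≤ 2 ^ k0 * ((m * ε ^ 2 / G) / 1024 * (9/8) ^ j) := by gcongr
        _ = _ := by ring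
  · intro K₀
    refine ⟨k0 + K₀, by omega, ?_⟩
    rw [Finset.sum_range_add]
    have hs : ∀ K : ℕ, ∑ k ∈ Finset.range K, (3/4 : ℝ) ^ k = 4 * (1 - (3/4) ^ K) := by
      intro K
      induction K with
      | zero => simp
      | succ n ih => rw [Finset.sum_range_succ, ih]; ring
    have h1 : ∑ k ∈ Finset.range k0, (if k < k0 then ε / (4 * l) else ε / 8 * (3/4) ^ (k - k0)) ≤ ε / 4 := by
      rw [Finset.sum_congr rfl (g := fun _ => ε / (4 * l))
        (fun k hk => if_pos (Finset.mem_range.1 hk))]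
      rw [Finset.sum_const, Finset.card_range, nsmul_eq_mul, mul_div_assoc', div_le_iff₀ (by positivity)]
      rw [hl]; nlinarith
    have h2 : ∑ k ∈ Finset.range K₀, (if k0 + k < k0 then ε / (4 * l) else ε / 8 * (3/4) ^ (k0 + k - k0)) ≤ ε / 2 := by
      simp only [not_lt.2 (Nat.le_add_right _ _), if_false, Nat.add_sub_cancel_left]
      rw [← Finset.mul_sum, hs]
      have : (0:ℝ) ≤ (3/4) ^ K₀ := by positivity
      nlinarith
    linarith

section frame2
open scoped RealInnerProductSpace

theorem step2 {Φ : ℝ → ℝ} (hpre : IsPhiPrefun Φ) {a1 : ℝ} (ha1 : 1 ≤ a1)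
    (hA1 : AIncP Φ 1 a1) {q : ℝ} (hq : 1 ≤ q) (hdec : DecQ Φ q)
    {E : Type*} [NormedAddCommGroup E] [InnerProductSpace ℝ E] [FiniteDimensional ℝ E]
    {Y : Type*} [Fintype Y] [Nonempty Y]
    {K : Y → E} {H : ℝ} (hH : 0 < H)
    (hK : ∀ y, ‖K y‖ ≤ H)
    (hpar : ∀ e f : E, ⟪e, f⟫ = (∑ y, ⟪K y, e⟫ * ⟪K y, f⟫) / Fintype.card Y)
    {N : ℕ} (hN1 : 1 ≤ N) (hN : Module.finrank ℝ E ≤ N) {V : ℝ} (hV : 1 ≤ V)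
    {ε : ℝ} (hε : 0 < ε) (hε1 : ε ≤ 1) (m : ℕ)
    (hm : 70000 * (V * (q * a1 * Φ ((1 + a1 / Φ 1 * V) * H ^ 2))) * ε⁻¹ ^ 2 *
      ((Nat.log 2 N : ℝ) + 1) ^ 2 * Real.log (4 * Fintype.card Y) ≤ m) :
    ∃ x : Fin m → Y, ∀ f : E, (∑ y, Φ |⟪K y, f⟫|) / Fintype.card Y ≤ V →
      |∑ j, Φ |⟪K (x j), f⟫| - m * ((∑ y, Φ |⟪K y, f⟫|) / Fintype.card Y)| ≤ m * ε := by
  have hM : (1:ℝ) ≤ Fintype.card Y := by exact_mod_cast Fintype.card_pos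
  have hlog : 1 ≤ Real.log (4 * Fintype.card Y) := by
    rw [Real.le_log_iff_exp_le (by positivity)]
    linarith [Real.exp_one_lt_d9]
  have hΦ1 := phi_pos hpre hdec one_pos
  set A := 1 + a1 / Φ 1 * V with hA
  have hApos : 0 < A := by positivity
  set R := A * H ^ 2 with hR
  have hRpos : 0 < R := by positivity
  have hΦR := phi_pos hpre hdec hRpos
  set L := q * a1 * Φ R with hL
  have hLpos : 0 < L := by positivity
  set S : Set E := {f | (∑ y, Φ |⟪K y, f⟫|) / Fintype.card Y ≤ V} with hS
  have hSA : ∀ f ∈ S, (∑ y, |⟪K y, f⟫|) / Fintype.card Y ≤ A := by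
    intro f hf
    have hf' : (∑ y, Φ |⟪K y, f⟫|) / Fintype.card Y ≤ V := hf
    have hMp : (0:ℝ) < Fintype.card Y := by linarith
    calc (∑ y, |⟪K y, f⟫|) / Fintype.card Y
        ≤ (∑ y, (1 + a1 / Φ 1 * Φ |⟪K y, f⟫|)) / Fintype.card Y :=
          div_le_div_of_nonneg_right (Finset.sum_le_sum fun y _ =>
            phi_lower hpre ha1 hA1 hdec (abs_nonneg _)) hMp.le
      _ = 1 + a1 / Φ 1 * ((∑ y, Φ |⟪K y, f⟫|) / Fintype.card Y) := by
          rw [Finset.sum_add_distrib, ← Finset.mul_sum, Finset.sum_const, Finset.card_univ,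
            nsmul_eq_mul]
          field_simp
      _ ≤ A := by rw [hA]; gcongr
  have hSR : ∀ f ∈ S, ∀ y, |⟪K y, f⟫| ≤ R := fun f hf y => frame_sup_le hK hpar (hSA f hf) y
  have hex : ∀ k : ℕ, ∃ T : Finset E, ↑T ⊆ S ∧
      (T.card : ℝ) ≤ Real.exp (min (66 * 2 ^ k * Real.log (4 * Fintype.card Y)) (N * (k + 2))) ∧
      (k = 0 → ∀ g ∈ T, g = 0) ∧
      ∀ f ∈ S, ∃ g ∈ T, ∀ y, |⟪K y, f - g⟫| ≤ R / 2 ^ k := by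
    intro k
    rcases Nat.eq_zero_or_pos k with hk | hk
    · refine ⟨{0}, ?_, ?_, ?_, ?_⟩
      · simp only [Finset.coe_singleton, Set.singleton_subset_iff]
        change (∑ y, Φ |⟪K y, (0:E)⟫|) / Fintype.card Y ≤ V
        simp [hpre.map_zero]; linarith
      · simp only [Finset.card_singleton, Nat.cast_one]
        apply Real.one_le_exp
        positivity
      · simp
      · intro f hf
        refine ⟨0, by simp, ?_⟩
        subst hk
        simpa using hSR f hf
    · rcases le_total (66 * 2 ^ k * Real.log (4 * Fintype.card Y)) (N * (k + 2) : ℝ) with h | h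
      · obtain ⟨T, h1, h2, h3⟩ := coarse_cover hH hK hpar hApos S hSA k
        exact ⟨T, h1, by rwa [min_eq_left h], fun h0 => by omega, h3⟩
      · obtain ⟨T, h1, h2, h3⟩ := fine_cover hH hK hpar hApos S hSA k hN
        exact ⟨T, h1, by rwa [min_eq_right h], fun h0 => by omega, h3⟩
  choose T hTS hTc hT0 hT using hex
  obtain ⟨u, hu0, hu2, hu, huK⟩ := chain_num hN1 hε hε1 (G := V * L) (by positivity) hlog m hm
    (fun k => min (66 * 2 ^ k * Real.log (4 * Fintype.card Y)) (N * (k + 2)))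
    (fun k => min_le_left _ _) (fun k => min_le_right _ _)
  obtain ⟨K₀, hK₀⟩ := pow_unbounded_of_one_lt (8 * L / ε) (one_lt_two)
  obtain ⟨k, hk, hsum⟩ := huK K₀
  obtain ⟨x, hx⟩ := chaining (fun (f : E) y => Φ |⟪K y, f⟫|) S T hLpos hV
    (fun f y => hpre.nonneg _ (abs_nonneg _)) (fun f hf => hf) (fun k g hg => hTS k hg)
    (fun g hg y => by
      rw [hT0 0 rfl g hg]; simp [hpre.map_zero])
    (fun k f hf => by
      obtain ⟨g, hg, hgf⟩ := hT k f hf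
      refine ⟨g, hg, fun y => ?_⟩
      refine (phi_lip hpre ha1 hA1 hq hdec (hSR f hf y) (hSR g (hTS k hg) y)).trans ?_
      rw [← inner_sub_right]
      calc q * a1 * Φ R / R * |⟪K y, f - g⟫| ≤ q * a1 * Φ R / R * (R / 2 ^ k) := by
            gcongr; exact hgf y
        _ = L / 2 ^ k := by rw [hL]; field_simp)
    _ u hTc hu0 hu2 m k (fun k => by
      have := hu k
      rwa [← mul_assoc] at this)
  refine ⟨x, fun f hf => (hx f hf).trans ?_⟩
  have h2 : 2 * L / 2 ^ k ≤ ε / 4 := by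
    have h3 : (2:ℝ) ^ K₀ ≤ 2 ^ k := pow_le_pow_right₀ (by norm_num) hk
    have h4 : 8 * L / ε ≤ 2 ^ k := hK₀.le.trans h3
    rw [div_le_iff₀ hε] at h4
    rw [div_le_iff₀ (by positivity)]
    linarith
  gcongr
  linarith

end frame2


theorem cm_abs_le {Ω : Type*} [TopologicalSpace Ω] [CompactSpace Ω] (f : C(Ω, ℝ)) (x : Ω) :
    |f x| ≤ ‖f‖ := f.norm_coe_le_norm x

section step1
variable {Ω : Type*} [TopologicalSpace Ω] [CompactSpace Ω] [MeasurableSpace Ω] [BorelSpace Ω]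
  {μ : Measure Ω} [IsProbabilityMeasure μ]


theorem sup_le_of_int {Φ : ℝ → ℝ} (hpre : IsPhiPrefun Φ) {a1 : ℝ} (ha1 : 1 ≤ a1)
    (hA1 : AIncP Φ 1 a1) {q : ℝ} (hdec : DecQ Φ q) {H V : ℝ} (hH : 0 < H) (f : C(Ω, ℝ))
    (hf : ‖f‖ ≤ H * Real.sqrt (∫ x, f x ^ 2 ∂μ)) (hV : ∫ x, Φ |f x| ∂μ ≤ V) :
    ‖f‖ ≤ (1 + a1 / Φ 1 * V) * H ^ 2 := by
  have hΦ1 := phi_pos hpre hdec one_pos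
  have hfm : Measurable (f : Ω → ℝ) := f.continuous.measurable
  have hi1 : Integrable (fun x => Φ |f x|) μ := phi_integrable hpre hfm (cm_abs_le f)
  have hi2 : Integrable (fun x => |f x|) μ :=
    Integrable.of_bound hfm.abs.aestronglyMeasurable ‖f‖
      (Filter.Eventually.of_forall fun x => by simpa using cm_abs_le f x)
  have h1 : ∫ x, |f x| ∂μ ≤ 1 + a1 / Φ 1 * V := by
    calc ∫ x, |f x| ∂μ ≤ ∫ x, (1 + a1 / Φ 1 * Φ |f x|) ∂μ :=
          integral_mono hi2 ((integrable_const _).add (hi1.const_mul _))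
            (fun x => phi_lower hpre ha1 hA1 hdec (abs_nonneg _))
      _ = 1 + a1 / Φ 1 * ∫ x, Φ |f x| ∂μ := by
          rw [integral_add (integrable_const _) (hi1.const_mul _), integral_const_mul]
          simp
      _ ≤ _ := by gcongr
  have h2 : ∫ x, f x ^ 2 ∂μ ≤ ‖f‖ * (1 + a1 / Φ 1 * V) := by
    calc ∫ x, f x ^ 2 ∂μ ≤ ∫ x, ‖f‖ * |f x| ∂μ := by
          refine integral_mono_of_nonneg (Filter.Eventually.of_forall fun x => sq_nonneg _)
            (hi2.const_mul _) (Filter.Eventually.of_forall fun x => ?_)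
          change f x ^ 2 ≤ ‖f‖ * |f x|
          rw [← sq_abs, sq]
          exact mul_le_mul_of_nonneg_right (cm_abs_le f x) (abs_nonneg _)
      _ = ‖f‖ * ∫ x, |f x| ∂μ := integral_const_mul _ _
      _ ≤ _ := by gcongr
  have h0 : 0 ≤ ∫ x, f x ^ 2 ∂μ := integral_nonneg fun x => sq_nonneg _
  have h3 : ‖f‖ ^ 2 ≤ H ^ 2 * ∫ x, f x ^ 2 ∂μ := by
    calc ‖f‖ ^ 2 ≤ (H * Real.sqrt (∫ x, f x ^ 2 ∂μ)) ^ 2 := by gcongr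
      _ = _ := by rw [mul_pow, Real.sq_sqrt h0]
  have h4 : ‖f‖ ^ 2 ≤ H ^ 2 * (‖f‖ * (1 + a1 / Φ 1 * V)) := h3.trans (by gcongr)
  rcases (norm_nonneg f).eq_or_lt with h | h
  · have hi : 0 ≤ ∫ x, |f x| ∂μ := integral_nonneg fun x => abs_nonneg _
    rw [← h]
    have : 0 ≤ 1 + a1 / Φ 1 * V := hi.trans h1
    positivity
  · nlinarith

theorem card_exp_bound {c : ℕ} {x : ℝ} {N : ℕ} (hx : 0 ≤ x) (hc : (c : ℝ) ≤ (1 + x) ^ N)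
    {y : ℝ} (hy : N * x + 2 ≤ y) : (c : ℝ) * (2 * Real.exp (-y)) < 1 / 2 := by
  have h1 : (c : ℝ) ≤ Real.exp (N * x) := by
    rw [Real.exp_nat_mul]
    refine hc.trans ?_
    gcongr
    linarith [Real.add_one_le_exp x]
  calc (c : ℝ) * (2 * Real.exp (-y)) ≤ Real.exp (N * x) * (2 * Real.exp (-(N * x + 2))) := by
        gcongr
    _ = 2 * Real.exp (-1) ^ 2 := by
        rw [← Real.exp_nat_mul, mul_left_comm, ← Real.exp_add]
        congr 2
        push_cast
        ring
    _ < 2 * (1/2) ^ 2 := by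
        gcongr
        rw [Real.exp_neg, one_div]
        gcongr
        linarith [Real.exp_one_gt_d9]
    _ = _ := by norm_num

set_option maxHeartbeats 1000000 in
theorem step1 {Φ : ℝ → ℝ} (hpre : IsPhiPrefun Φ) {a1 : ℝ} (ha1 : 1 ≤ a1)
    (hA1 : AIncP Φ 1 a1) {q : ℝ} (hq : 1 ≤ q) (hdec : DecQ Φ q)
    (X : Submodule ℝ C(Ω, ℝ)) [FiniteDimensional ℝ X] {N : ℕ} (hN : Module.finrank ℝ X = N)
    {H : ℝ} (hH : 1 ≤ H)
    (hX : ∀ f ∈ X, ‖f‖ ≤ H * Real.sqrt (∫ x, f x ^ 2 ∂μ)) {V : ℝ} (hV : 1 ≤ V)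
    {ε : ℝ} (hε : 0 < ε) (hε1 : ε ≤ 1) {R : ℝ} (hR : R = (1 + a1 / Φ 1 * V) * H ^ 2) (M : ℕ)
    (hM1 : 64 * H ^ 2 * (N * (16 * H ^ 2) + 2) ≤ M)
    (hM2 : 16 * V * Φ R * ε⁻¹ ^ 2 * (N * (8 * (q * a1 * Φ R) / ε) + 2) ≤ M) :
    ∃ y : Fin M → Ω, (∀ f ∈ X, ∫ x, f x ^ 2 ∂μ ≤ 2 * ((∑ j, f (y j) ^ 2) / M)) ∧
      ∀ f ∈ X, ∫ x, Φ |f x| ∂μ ≤ V →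
        |∑ j, Φ |f (y j)| - M * ∫ x, Φ |f x| ∂μ| ≤ M * ε := by
  classical
  have hH0 : 0 < H := by linarith
  have hΦ1 := phi_pos hpre hdec one_pos
  have hRpos : 0 < R := by rw [hR]; positivity
  have hΦR := phi_pos hpre hdec hRpos
  have hM0 : (0:ℝ) < M := lt_of_lt_of_le (by positivity) hM1
  set lip := q * a1 * Φ R / R with hlip
  have hlippos : 0 < lip := by positivity
  set δ := ε / (4 * lip) with hδ
  have hδpos : 0 < δ := by positivity
  let S1 : Set X := {f | ∫ x, (f : C(Ω, ℝ)) x ^ 2 ∂μ = 1}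
  let S2 : Set X := {f | ∫ x, Φ |(f : C(Ω, ℝ)) x| ∂μ ≤ V}
  have hS1 : ∀ f ∈ S1, ‖f‖ ≤ H := by
    intro f hf
    have := hX f f.2
    rwa [show ∫ x, (f : C(Ω, ℝ)) x ^ 2 ∂μ = 1 from hf, Real.sqrt_one, mul_one] at this
  have hS2 : ∀ f ∈ S2, ‖f‖ ≤ R := by
    intro f hf
    have hf' : ∫ x, Φ |(f : C(Ω, ℝ)) x| ∂μ ≤ V := hf
    have := sup_le_of_int hpre ha1 hA1 hdec hH0 (f : C(Ω, ℝ)) (hX _ f.2) hf'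
    rw [← hR] at this
    exact this
  obtain ⟨T1, hT1S, hT1c, hT1⟩ := exists_cover_of_sep S1 (fun f g => ‖f - g‖ ≤ 1 / (8 * H))
    (by intro f; simp; positivity) (by intro f g h; exact (norm_sub_rev g f).le.trans h) _
    (fun T hT hs => card_le_of_sep_ball T (ρ := H) (η := 1 / (8 * H)) (by positivity) (by positivity)
      (fun f hf => hS1 f (hT hf)) (fun f hf g hg hfg => (not_le.1 (hs f hf g hg hfg)).le))
  obtain ⟨T2, hT2S, hT2c, hT2⟩ := exists_cover_of_sep S2 (fun f g => ‖f - g‖ ≤ δ)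
    (by intro f; simp; positivity) (by intro f g h; exact (norm_sub_rev g f).le.trans h) _
    (fun T hT hs => card_le_of_sep_ball T (ρ := R) (η := δ) (by positivity) (by positivity)
      (fun f hf => hS2 f (hT hf)) (fun f hf g hg hfg => (not_le.1 (hs f hf g hg hfg)).le))
  have e1 : 2 * H / (1 / (8 * H)) = 16 * H ^ 2 := by field_simp; norm_num
  have e2 : 2 * R / δ = 8 * (q * a1 * Φ R) / ε := by
    rw [hδ, hlip]; field_simp; norm_num
  rw [e1, hN] at hT1c
  rw [e2, hN] at hT2c
  have hmeas : ∀ f : X, Measurable (fun x => (f : C(Ω, ℝ)) x) := fun f => (f : C(Ω, ℝ)).continuous.measurable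
  have habs : ∀ (f : X) x, |(f : C(Ω, ℝ)) x| ≤ ‖f‖ := fun f x => cm_abs_le (f : C(Ω, ℝ)) x
  have hisq : ∀ f : X, Integrable (fun x => (f : C(Ω, ℝ)) x ^ 2) μ := fun f =>
    Integrable.of_bound ((hmeas f).pow_const 2).aestronglyMeasurable (‖f‖ ^ 2)
      (Filter.Eventually.of_forall fun x => by
        rw [norm_pow]; exact pow_le_pow_left₀ (norm_nonneg _) (habs f x) 2)
  have hiΦ : ∀ f : X, Integrable (fun x => Φ |(f : C(Ω, ℝ)) x|) μ := fun f =>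
    phi_integrable hpre (hmeas f) (habs f)
  obtain ⟨y, hy⟩ := exists_points μ (ι := T1 ⊕ T2)
    (Sum.elim (fun g x => (g.1 : C(Ω, ℝ)) x ^ 2) (fun g x => Φ |(g.1 : C(Ω, ℝ)) x|))
    (by
      rintro (g | g)
      · exact (hmeas g.1).pow_const 2
      · exact phi_measurable hpre (hmeas g.1))
    (Sum.elim (fun _ => H ^ 2) (fun _ => V * Φ R)) (Sum.elim (fun _ => 1 / 4) (fun _ => ε / 2))
    (by rintro (g | g) <;> simp only [Sum.elim_inl, Sum.elim_inr] <;> positivity)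
    (by rintro (g | g) <;> simp only [Sum.elim_inl, Sum.elim_inr] <;> positivity)
    (by rintro (g | g) <;> simp only [Sum.elim_inl, Sum.elim_inr] <;> linarith)
    (by
      rintro (g | g) x
      · simp only [Sum.elim_inl]
        rw [abs_pow]
        exact pow_le_pow_left₀ (abs_nonneg _) ((habs _ x).trans (hS1 _ (hT1S g.2))) 2
      · simp only [Sum.elim_inr]
        rw [abs_of_nonneg (hpre.nonneg _ (abs_nonneg _))]
        have := phi_mono hpre (abs_nonneg _) ((habs g.1 x).trans (hS2 _ (hT2S g.2)))
        nlinarith)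
    (by
      rintro (g | g)
      · simp only [Sum.elim_inl]
        calc ∫ x, ((g.1 : C(Ω, ℝ)) x ^ 2) ^ 2 ∂μ ≤ ∫ x, H ^ 2 * ((g.1 : C(Ω, ℝ)) x ^ 2) ∂μ := by
              refine integral_mono_of_nonneg (Filter.Eventually.of_forall fun x => sq_nonneg _)
                ((hisq g.1).const_mul _) (Filter.Eventually.of_forall fun x => ?_)
              change ((g.1 : C(Ω, ℝ)) x ^ 2) ^ 2 ≤ H ^ 2 * ((g.1 : C(Ω, ℝ)) x ^ 2)
              rw [sq ((g.1 : C(Ω, ℝ)) x ^ 2)]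
              refine mul_le_mul_of_nonneg_right ?_ (sq_nonneg _)
              rw [← sq_abs]
              exact pow_le_pow_left₀ (abs_nonneg _) ((habs _ x).trans (hS1 _ (hT1S g.2))) 2
          _ = H ^ 2 := by
              rw [integral_const_mul, show ∫ x, (g.1 : C(Ω, ℝ)) x ^ 2 ∂μ = 1 from hT1S g.2, mul_one]
      · simp only [Sum.elim_inr]
        calc ∫ x, (Φ |(g.1 : C(Ω, ℝ)) x|) ^ 2 ∂μ ≤ ∫ x, Φ R * (Φ |(g.1 : C(Ω, ℝ)) x|) ∂μ := by
              refine integral_mono_of_nonneg (Filter.Eventually.of_forall fun x => sq_nonneg _)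
                ((hiΦ g.1).const_mul _) (Filter.Eventually.of_forall fun x => ?_)
              change (Φ |(g.1 : C(Ω, ℝ)) x|) ^ 2 ≤ Φ R * (Φ |(g.1 : C(Ω, ℝ)) x|)
              rw [sq]
              refine mul_le_mul_of_nonneg_right ?_ (hpre.nonneg _ (abs_nonneg _))
              exact phi_mono hpre (abs_nonneg _) ((habs g.1 x).trans (hS2 _ (hT2S g.2)))
          _ = Φ R * ∫ x, Φ |(g.1 : C(Ω, ℝ)) x| ∂μ := integral_const_mul _ _
          _ ≤ Φ R * V := by gcongr; exact hT2S g.2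
          _ = _ := mul_comm _ _)
    M (by
      rw [Fintype.sum_sum_type]
      simp only [Sum.elim_inl, Sum.elim_inr, Finset.sum_const, Finset.card_univ, Fintype.card_coe,
        nsmul_eq_mul]
      have h1 := card_exp_bound (x := 16 * H ^ 2) (by positivity) hT1c
        (y := M * (1 / 4) ^ 2 / (4 * H ^ 2)) (by
          rw [le_div_iff₀ (by positivity)]
          linarith)
      have h2 := card_exp_bound (x := 8 * (q * a1 * Φ R) / ε) (by positivity) hT2c
        (y := M * (ε / 2) ^ 2 / (4 * (V * Φ R))) (by
          rw [le_div_iff₀ (by positivity)]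
          have : (16 * V * Φ R * ε⁻¹ ^ 2 * (N * (8 * (q * a1 * Φ R) / ε) + 2)) * (ε / 2) ^ 2
            ≤ M * (ε / 2) ^ 2 := by gcongr
          refine le_trans (le_of_eq ?_) this
          field_simp
          norm_num)
      linarith)
  refine ⟨y, ?_, ?_⟩
  · have hone : ∀ f ∈ S1, (M : ℝ) ≤ 2 * ∑ j, (f : C(Ω, ℝ)) (y j) ^ 2 := by
      intro f hf
      obtain ⟨g, hg, hfg⟩ := hT1 f hf
      have h1 := hy (Sum.inl ⟨g, hg⟩)
      simp only [Sum.elim_inl] at h1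
      rw [show ∫ x, (g : C(Ω, ℝ)) x ^ 2 ∂μ = 1 from hT1S hg, abs_le] at h1
      have h2 : ∀ j, (g : C(Ω, ℝ)) (y j) ^ 2 - 1 / 4 ≤ (f : C(Ω, ℝ)) (y j) ^ 2 := by
        intro j
        have ha := (habs f (y j)).trans (hS1 f hf)
        have hb := (habs g (y j)).trans (hS1 g (hT1S hg))
        have hc : |(f : C(Ω, ℝ)) (y j) - (g : C(Ω, ℝ)) (y j)| ≤ 1 / (8 * H) := (habs (f - g) (y j)).trans hfg
        have hd : |((f : C(Ω, ℝ)) (y j) - (g : C(Ω, ℝ)) (y j)) * ((f : C(Ω, ℝ)) (y j) + (g : C(Ω, ℝ)) (y j))|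
            ≤ 1 / (8 * H) * (H + H) := by
          rw [abs_mul]
          refine mul_le_mul hc ((abs_add_le _ _).trans (add_le_add ha hb)) (abs_nonneg _) (by positivity)
        have he : 1 / (8 * H) * (H + H) = 1 / 4 := by field_simp; norm_num
        rw [he, abs_le] at hd
        nlinarith [hd.1]
      have h3 := Finset.sum_le_sum fun j (_ : j ∈ Finset.univ) => h2 j
      rw [Finset.sum_sub_distrib] at h3
      simp only [Finset.sum_const, Finset.card_univ, Fintype.card_fin, nsmul_eq_mul] at h3
      linarith [h1.1]
    intro f hf
    have h0 : 0 ≤ ∫ x, f x ^ 2 ∂μ := integral_nonneg fun x => sq_nonneg _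
    rcases h0.eq_or_lt with h | h
    · rw [← h]; positivity
    · set s := Real.sqrt (∫ x, f x ^ 2 ∂μ) with hs
      have hs2 : s ^ 2 = ∫ x, f x ^ 2 ∂μ := Real.sq_sqrt h0
      have hspos : 0 < s := Real.sqrt_pos.2 h
      have := hone (s⁻¹ • ⟨f, hf⟩) (by
        change ∫ x, (s⁻¹ * f x) ^ 2 ∂μ = 1
        simp_rw [mul_pow]
        rw [integral_const_mul, ← hs2]
        field_simp)
      change (M:ℝ) ≤ 2 * ∑ j, (s⁻¹ * f (y j)) ^ 2 at this
      simp_rw [mul_pow] at this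
      rw [← Finset.mul_sum] at this
      rw [← hs2]
      rw [mul_div_assoc', le_div_iff₀ hM0]
      calc s ^ 2 * M ≤ s ^ 2 * (2 * (s⁻¹ ^ 2 * ∑ j, f (y j) ^ 2)) := by gcongr
        _ = _ := by field_simp
  · suffices hkey : ∀ f : X, f ∈ S2 → |∑ j, Φ |(f : C(Ω, ℝ)) (y j)| - M * ∫ x, Φ |(f : C(Ω, ℝ)) x| ∂μ| ≤ M * ε from
      fun f hf hfV => hkey ⟨f, hf⟩ hfV
    intro f hfV
    obtain ⟨g, hg, hfg⟩ := hT2 f hfV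
    have h1 := hy (Sum.inr ⟨g, hg⟩)
    simp only [Sum.elim_inr] at h1
    have hd : ∀ x, abs (Φ |(f : C(Ω, ℝ)) x| - Φ |(g : C(Ω, ℝ)) x|) ≤ ε / 4 := by
      intro x
      refine (phi_lip hpre ha1 hA1 hq hdec (R := R) ((habs f x).trans (hS2 f hfV))
        ((habs g x).trans (hS2 g (hT2S hg)))).trans ?_
      have hc : |(f : C(Ω, ℝ)) x - (g : C(Ω, ℝ)) x| ≤ δ := (habs (f - g) x).trans hfg
      calc lip * |(f : C(Ω, ℝ)) x - (g : C(Ω, ℝ)) x| ≤ lip * δ := by gcongr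
        _ = ε / 4 := by rw [hδ]; field_simp
    have h2 : abs (∑ j, Φ |(f : C(Ω, ℝ)) (y j)| - ∑ j, Φ |(g : C(Ω, ℝ)) (y j)|) ≤ M * (ε / 4) := by
      rw [← Finset.sum_sub_distrib]
      refine (Finset.abs_sum_le_sum_abs _ _).trans ?_
      refine (Finset.sum_le_sum fun j _ => hd (y j)).trans ?_
      simp
    have h3 : abs (∫ x, Φ |(f : C(Ω, ℝ)) x| ∂μ - ∫ x, Φ |(g : C(Ω, ℝ)) x| ∂μ) ≤ ε / 4 := by
      rw [← integral_sub (hiΦ f) (hiΦ g)]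
      have := norm_integral_le_of_norm_le_const (μ := μ)
        (f := fun x => Φ |(f : C(Ω, ℝ)) x| - Φ |(g : C(Ω, ℝ)) x|) (Filter.Eventually.of_forall hd)
      simpa using this
    rw [abs_le] at h1 h2 h3 ⊢
    have h4 : M * (∫ x, Φ |(f : C(Ω, ℝ)) x| ∂μ - ∫ x, Φ |(g : C(Ω, ℝ)) x| ∂μ) ≤ M * (ε / 4) := by
      gcongr; exact h3.2
    have h5 : M * (-(ε / 4)) ≤ M * (∫ x, Φ |(f : C(Ω, ℝ)) x| ∂μ - ∫ x, Φ |(g : C(Ω, ℝ)) x| ∂μ) := by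
      gcongr; exact h3.1
    constructor <;> linarith [h1.1, h1.2, h2.1, h2.2]

end step1


section combine
open scoped RealInnerProductSpace
variable {Ω : Type*} [TopologicalSpace Ω] [CompactSpace Ω] [MeasurableSpace Ω] [BorelSpace Ω]
  {μ : Measure Ω} [IsProbabilityMeasure μ]

theorem frame_of (X : Submodule ℝ C(Ω, ℝ)) {H : ℝ} (hH : 1 ≤ H)
    (hX : ∀ f ∈ X, ‖f‖ ≤ H * Real.sqrt (∫ x, f x ^ 2 ∂μ)) {M : ℕ} (hM : 0 < M)
    (y : Fin M → Ω) (hy : ∀ f ∈ X, ∫ x, f x ^ 2 ∂μ ≤ 2 * ((∑ j, f (y j) ^ 2) / M)) :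
    ∃ (E : Submodule ℝ (EuclideanSpace ℝ (Fin M))) (K : Fin M → E) (r : X → E),
      (∀ j f, ⟪K j, r f⟫ = (f : C(Ω, ℝ)) (y j)) ∧ (∀ j, ‖K j‖ ≤ Real.sqrt 2 * H) ∧
      (∀ e f : E, ⟪e, f⟫ = (∑ j, ⟪K j, e⟫ * ⟪K j, f⟫) / Fintype.card (Fin M)) ∧
      Module.finrank ℝ E = Module.finrank ℝ X := by
  have hMr : (0:ℝ) < M := by exact_mod_cast hM
  have hsM : 0 < Real.sqrt M := Real.sqrt_pos.2 hMr
  have hsM2 : Real.sqrt M * Real.sqrt M = M := Real.mul_self_sqrt hMr.le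
  let r : X →ₗ[ℝ] EuclideanSpace ℝ (Fin M) :=
    { toFun := fun f => WithLp.toLp 2 (fun j => (f : C(Ω, ℝ)) (y j) / Real.sqrt M)
      map_add' := fun f g => by
        ext j; simp [add_div]
      map_smul' := fun c f => by
        ext j; simp [mul_div_assoc] }
  have hr : ∀ f j, (r f) j = (f : C(Ω, ℝ)) (y j) / Real.sqrt M := fun f j => rfl
  let E := LinearMap.range r
  let φ : Fin M → (E →ₗ[ℝ] ℝ) := fun j =>
    { toFun := fun e => Real.sqrt M * (e : EuclideanSpace ℝ (Fin M)) j
      map_add' := fun e f => by simp [mul_add]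
      map_smul' := fun c e => by simp; ring }
  let K : Fin M → E := fun j => (InnerProductSpace.toDual ℝ E).symm (LinearMap.toContinuousLinearMap (φ j))
  have hKe : ∀ j (e : E), ⟪K j, e⟫ = Real.sqrt M * (e : EuclideanSpace ℝ (Fin M)) j := by
    intro j e
    simp only [K]
    rw [InnerProductSpace.toDual_symm_apply]
    rfl
  have hrn : ∀ f : X, ‖r f‖ ^ 2 = (∑ j, (f : C(Ω, ℝ)) (y j) ^ 2) / M := by
    intro f
    rw [EuclideanSpace.norm_sq_eq, Finset.sum_div]
    refine Finset.sum_congr rfl fun j _ => ?_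
    rw [hr, Real.norm_eq_abs, sq_abs, div_pow, sq (Real.sqrt M), hsM2]
  have hfr : ∀ f : X, ‖f‖ ≤ Real.sqrt 2 * H * ‖r f‖ := by
    intro f
    have h1 := hX f f.2
    have h2 := hy f f.2
    rw [← hrn] at h2
    calc ‖f‖ ≤ H * Real.sqrt (∫ x, (f : C(Ω, ℝ)) x ^ 2 ∂μ) := h1
      _ ≤ H * Real.sqrt (2 * ‖r f‖ ^ 2) := by gcongr
      _ = _ := by
        rw [Real.sqrt_mul (by norm_num), Real.sqrt_sq (norm_nonneg _)]; ring
  refine ⟨E, K, fun f => ⟨r f, LinearMap.mem_range_self r f⟩, ?_, ?_, ?_, ?_⟩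
  · intro j f
    rw [hKe]
    change Real.sqrt M * ((f : C(Ω, ℝ)) (y j) / Real.sqrt M) = _
    field_simp
  · intro j
    obtain ⟨f, hf⟩ := (K j).2
    have h1 : ‖K j‖ ^ 2 = (f : C(Ω, ℝ)) (y j) := by
      rw [← real_inner_self_eq_norm_sq, hKe, ← hf, hr]
      field_simp
    have h2 : ‖K j‖ = ‖r f‖ := by rw [hf]; rfl
    have h3 : (f : C(Ω, ℝ)) (y j) ≤ ‖f‖ := (le_abs_self _).trans (cm_abs_le (f : C(Ω, ℝ)) (y j))
    have h4 : ‖K j‖ ^ 2 ≤ Real.sqrt 2 * H * ‖K j‖ := by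
      rw [h1, h2]; exact h3.trans (hfr f)
    rcases (norm_nonneg (K j)).eq_or_lt with h | h
    · rw [← h]; positivity
    · nlinarith
  · intro e f
    simp only [hKe]
    rw [Fintype.card_fin, Finset.sum_div]
    change ⟪(e : EuclideanSpace ℝ (Fin M)), (f : EuclideanSpace ℝ (Fin M))⟫ = _
    rw [PiLp.inner_apply]
    refine Finset.sum_congr rfl fun j _ => ?_
    rw [mul_mul_mul_comm, hsM2]
    field_simp
    simp [mul_comm]
  · apply LinearMap.finrank_range_of_inj
    rw [← LinearMap.ker_eq_bot, LinearMap.ker_eq_bot']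
    intro f hf
    have := hfr f
    rw [hf, norm_zero, mul_zero] at this
    exact norm_le_zero_iff.1 this

theorem dim_le {Φ : ℝ → ℝ} (hpre : IsPhiPrefun Φ) {a1 : ℝ} (ha1 : 1 ≤ a1)
    (hA1 : AIncP Φ 1 a1) {q : ℝ} (hq : 1 ≤ q) (hdec : DecQ Φ q)
    (X : Submodule ℝ C(Ω, ℝ)) [FiniteDimensional ℝ X] {N : ℕ} (hN : Module.finrank ℝ X = N)
    {H : ℝ} (hH : 1 ≤ H)
    (hX : ∀ f ∈ X, ‖f‖ ≤ H * Real.sqrt (∫ x, f x ^ 2 ∂μ)) : (N : ℝ) ≤ 2 * H ^ 2 := by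
  obtain ⟨M, hM⟩ := exists_nat_ge (max (64 * H ^ 2 * (N * (16 * H ^ 2) + 2))
    (16 * 1 * Φ ((1 + a1 / Φ 1 * 1) * H ^ 2) * (1:ℝ)⁻¹ ^ 2 *
      (N * (8 * (q * a1 * Φ ((1 + a1 / Φ 1 * 1) * H ^ 2)) / 1) + 2)))
  obtain ⟨y, hy, -⟩ := step1 hpre ha1 hA1 hq hdec X hN hH hX le_rfl one_pos le_rfl rfl M
    ((le_max_left _ _).trans hM) ((le_max_right _ _).trans hM)
  have hM0 : 0 < M := by
    have : (0:ℝ) < M := lt_of_lt_of_le (by positivity) ((le_max_left _ _).trans hM)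
    exact_mod_cast this
  have : Nonempty (Fin M) := ⟨⟨0, hM0⟩⟩
  obtain ⟨E, K, r, -, h2, h3, h4⟩ := frame_of X hH hX hM0 y hy
  have := frame_dim h2 h3
  rw [h4, hN, mul_pow, Real.sq_sqrt (by norm_num)] at this
  exact this

theorem sample {Φ : ℝ → ℝ} (hpre : IsPhiPrefun Φ) {a1 : ℝ} (ha1 : 1 ≤ a1)
    (hA1 : AIncP Φ 1 a1) {q : ℝ} (hq : 1 ≤ q) (hdec : DecQ Φ q)
    (X : Submodule ℝ C(Ω, ℝ)) [FiniteDimensional ℝ X] {N : ℕ} (hN1 : 1 ≤ N)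
    (hN : Module.finrank ℝ X = N)
    {H : ℝ} (hH : 1 ≤ H)
    (hX : ∀ f ∈ X, ‖f‖ ≤ H * Real.sqrt (∫ x, f x ^ 2 ∂μ)) {V : ℝ} (hV : 1 ≤ V)
    {ε : ℝ} (hε : 0 < ε) (hε1 : ε ≤ 1) {R : ℝ} (hR : R = (1 + a1 / Φ 1 * V) * H ^ 2) (M m : ℕ)
    (hM1 : 64 * H ^ 2 * (N * (16 * H ^ 2) + 2) ≤ M)
    (hM2 : 16 * V * Φ R * ε⁻¹ ^ 2 * (N * (8 * (q * a1 * Φ R) / ε) + 2) ≤ M)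
    (hm : 70000 * ((V + 1) * (q * a1 * Φ ((1 + a1 / Φ 1 * (V + 1)) * (2 * H ^ 2)))) * ε⁻¹ ^ 2 *
      ((Nat.log 2 N : ℝ) + 1) ^ 2 * Real.log (4 * M) ≤ m) :
    ∃ x : Fin m → Ω, ∀ f ∈ X, ∫ x, Φ |f x| ∂μ ≤ V →
        |∑ j, Φ |f (x j)| - m * ∫ x, Φ |f x| ∂μ| ≤ m * (2 * ε) := by
  obtain ⟨y, hy, hyV⟩ := step1 hpre ha1 hA1 hq hdec X hN hH hX hV hε hε1 hR M hM1 hM2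
  have hMr : (0:ℝ) < M := lt_of_lt_of_le (by positivity) hM1
  have hM0 : 0 < M := by exact_mod_cast hMr
  have : Nonempty (Fin M) := ⟨⟨0, hM0⟩⟩
  obtain ⟨E, K, r, h1, h2, h3, h4⟩ := frame_of X hH hX hM0 y hy
  obtain ⟨z, hz⟩ := step2 hpre ha1 hA1 hq hdec (H := Real.sqrt 2 * H) (by positivity) h2 h3 hN1
    (h4.trans hN).le (V := V + 1) (by linarith) hε hε1 m (by
      rw [Fintype.card_fin, mul_pow, Real.sq_sqrt (by norm_num)]
      exact hm)
  refine ⟨fun j => y (z j), fun f hf hfV => ?_⟩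
  have h5 := hyV f hf hfV
  have h6 := hz (r ⟨f, hf⟩)
  simp only [h1, Fintype.card_fin] at h6
  set a := (∑ j, Φ |f (y j)|) / M with ha
  have h7 : |a - ∫ x, Φ |f x| ∂μ| ≤ ε := by
    have e : ∑ j, Φ |f (y j)| = M * a := by rw [ha]; field_simp
    rw [e, ← mul_sub, abs_mul, abs_of_pos hMr] at h5
    exact le_of_mul_le_mul_left h5 hMr
  rw [abs_le] at h7
  have h8 := h6 (by linarith [h7.1, h7.2])
  rw [abs_le] at h8 ⊢
  have hm0 : (0:ℝ) ≤ m := Nat.cast_nonneg _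
  have h9 := mul_le_mul_of_nonneg_left h7.1 hm0
  have h10 := mul_le_mul_of_nonneg_left h7.2 hm0
  constructor <;> linarith [h8.1, h8.2]

end combine

set_option maxHeartbeats 1000000 in
theorem consts {Φ : ℝ → ℝ} (hpre : IsPhiPrefun Φ) {a1 : ℝ} (ha1 : 1 ≤ a1)
    {q : ℝ} (hq : 1 ≤ q) (hdec : DecQ Φ q) {V : ℝ} (hV : 1 ≤ V) :
    ∃ C : ℝ, 0 < C ∧ ∀ (N : ℕ) (H ε : ℝ), 1 ≤ N → 1 ≤ H → (N : ℝ) ≤ 2 * H ^ 2 → 0 < ε → ε ≤ 1 / 2 →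
      ∃ M m : ℕ, 64 * H ^ 2 * (N * (16 * H ^ 2) + 2) ≤ M ∧
        16 * V * Φ ((1 + a1 / Φ 1 * V) * H ^ 2) * (ε / 8)⁻¹ ^ 2 *
          (N * (8 * (q * a1 * Φ ((1 + a1 / Φ 1 * V) * H ^ 2)) / (ε / 8)) + 2) ≤ M ∧
        70000 * ((V + 1) * (q * a1 * Φ ((1 + a1 / Φ 1 * (V + 1)) * (2 * H ^ 2)))) * (ε / 8)⁻¹ ^ 2 *
          ((Nat.log 2 N : ℝ) + 1) ^ 2 * Real.log (4 * M) ≤ m ∧ 0 < m ∧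
        (m : ℝ) ≤ C * ε⁻¹ ^ 2 * Real.logb 2 ε⁻¹ * Φ (H ^ 2) *
            (Real.logb 2 (2 * N)) ^ 2 * Real.logb 2 (2 * H ^ 2) := by
  have hΦ1 := phi_pos hpre hdec one_pos
  obtain ⟨n, hn⟩ := exists_nat_ge q
  set A := 1 + a1 / Φ 1 * (V + 1) with hA
  have hA1 : 1 ≤ A := by rw [hA]; have : 0 ≤ a1 / Φ 1 * (V + 1) := by positivity
                         linarith
  set c2 := (2 * A) ^ q with hc2
  have hc2pos : 0 < c2 := by positivity
  set c := c2 * Φ 1 with hc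
  have hcpos : 0 < c := by positivity
  set c4 := 4 * (1088 + 1024 * V * c * (64 * (q * a1) * c + 2) + 1) with hc4
  have hc4pos : 1 ≤ c4 := by
    have : 0 ≤ 1024 * V * c * (64 * (q * a1) * c + 2) := by positivity
    rw [hc4]; linarith
  have hlc4 : 0 ≤ Real.log c4 := Real.log_nonneg hc4pos
  set C5 := Real.log c4 + (2 * n + 3 : ℕ) + 3 with hC5
  have hC5pos : 0 < C5 := by positivity
  refine ⟨70000 * ((V + 1) * (q * a1 * c2)) * 64 * C5 + 1 / Φ 1, by positivity, ?_⟩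
  intro N H ε hN hH hNH hε hε2
  set h := 2 * H ^ 2 with hh
  set e := ε⁻¹ with he
  have he2 : 2 ≤ e := by
    rw [he, le_inv_comm₀ (by norm_num) hε]; linarith
  have hH2 : 1 ≤ H ^ 2 := one_le_pow₀ hH
  have hh2 : 2 ≤ h := by rw [hh]; linarith
  set P := Φ (H ^ 2) with hP
  have hP1 : Φ 1 ≤ P := phi_mono hpre zero_le_one hH2
  have hPpos : 0 < P := by linarith
  have hPn : P ≤ Φ 1 * h ^ n := by
    have h1 := phi_dec hpre hdec hH2 zero_le_one
    rw [mul_one] at h1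
    calc P ≤ (H ^ 2) ^ q * Φ 1 := h1
      _ ≤ (H ^ 2) ^ (n : ℝ) * Φ 1 := by
          gcongr
      _ ≤ h ^ n * Φ 1 := by
          rw [Real.rpow_natCast]
          gcongr
          rw [hh]; linarith
      _ = _ := mul_comm _ _
  have hR2 : Φ (A * h) ≤ c2 * P := by
    have := phi_dec hpre hdec (c := 2 * A) (t := H ^ 2) (by linarith) (by positivity)
    calc Φ (A * h) = Φ (2 * A * H ^ 2) := by rw [hh]; congr 1; ring
      _ ≤ _ := this
  set R := (1 + a1 / Φ 1 * V) * H ^ 2 with hR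
  have hRpos : 0 < R := by positivity
  have hΦR := phi_pos hpre hdec hRpos
  have hR1 : Φ R ≤ c * h ^ n := by
    calc Φ R ≤ Φ (A * h) := by
          apply phi_mono hpre hRpos.le
          rw [hR, hA, hh]
          gcongr <;> linarith
      _ ≤ c2 * P := hR2
      _ ≤ c2 * (Φ 1 * h ^ n) := by gcongr
      _ = _ := by rw [hc]; ring
  have he8 : (ε / 8)⁻¹ = 8 * e := by rw [he]; field_simp
  have he8' : ∀ x : ℝ, x / (ε / 8) = x * (8 * e) := fun x => by rw [← he8, div_eq_mul_inv]
  rw [he8, he8']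
  set B1 := 64 * H ^ 2 * (N * (16 * H ^ 2) + 2) with hB1
  set B2 := 16 * V * Φ R * (8 * e) ^ 2 * (N * (8 * (q * a1 * Φ R) * (8 * e)) + 2) with hB2
  have hB1pos : 0 ≤ B1 := by positivity
  have hB2pos : 0 ≤ B2 := by positivity
  obtain ⟨M, hM⟩ : ∃ M : ℕ, M = ⌈B1 + B2⌉₊ := ⟨_, rfl⟩
  have hMge : B1 + B2 ≤ M := by rw [hM]; exact Nat.le_ceil _
  have hMle : (M : ℝ) ≤ B1 + B2 + 1 := by rw [hM]; exact (Nat.ceil_lt_add_one (by positivity)).le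
  have hHh : H ^ 2 ≤ h := by rw [hh]; linarith
  have hhn : 1 ≤ h ^ n := one_le_pow₀ (by linarith)
  have hb1 : B1 ≤ 1088 * h ^ 3 := by
    calc B1 ≤ 64 * h * (h * (16 * h) + h ^ 2) := by
          rw [hB1]; gcongr; nlinarith
      _ = _ := by ring
  have hb2 : B2 ≤ 1024 * V * c * (64 * (q * a1) * c + 2) * (h ^ (2 * n + 1) * e ^ 3) := by
    calc B2 ≤ 16 * V * (c * h ^ n) * (8 * e) ^ 2 * (h * (8 * (q * a1 * (c * h ^ n)) * (8 * e)) + 2 * (h ^ n * h * e)) := by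
          rw [hB2]; gcongr
          have : 1 ≤ h ^ n * h * e := by
            exact one_le_mul_of_one_le_of_one_le
              (one_le_mul_of_one_le_of_one_le hhn (by linarith)) (by linarith)
          linarith
      _ = _ := by ring
  have hM4 : 4 * (M : ℝ) ≤ c4 * (h ^ (2 * n + 3) * e ^ 3) := by
    have he3 : 1 ≤ e ^ 3 := one_le_pow₀ (by linarith)
    have hp3 : h ^ 3 ≤ h ^ (2 * n + 3) := pow_le_pow_right₀ (by linarith) (by omega)
    have hp1 : h ^ (2 * n + 1) ≤ h ^ (2 * n + 3) := pow_le_pow_right₀ (by linarith) (by omega)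
    have hp0 : 1 ≤ h ^ (2 * n + 3) := one_le_pow₀ (by linarith)
    have h1 : B1 ≤ 1088 * (h ^ (2 * n + 3) * e ^ 3) := hb1.trans (by
      have : h ^ (2 * n + 3) ≤ h ^ (2 * n + 3) * e ^ 3 := le_mul_of_one_le_right (by linarith) he3
      linarith)
    have h2 : B2 ≤ 1024 * V * c * (64 * (q * a1) * c + 2) * (h ^ (2 * n + 3) * e ^ 3) :=
      hb2.trans (by gcongr)
    have h3 : 1 ≤ h ^ (2 * n + 3) * e ^ 3 := one_le_mul_of_one_le_of_one_le hp0 he3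
    rw [hc4]
    linarith
  have hMpos : (0:ℝ) < M := lt_of_lt_of_le (by positivity : 0 < B1) (by linarith)
  have hM1 : (1:ℝ) ≤ M := by
    have : 0 < M := by exact_mod_cast hMpos
    exact_mod_cast this
  have hlogle : ∀ x : ℝ, 2 ≤ x → Real.log x ≤ Real.logb 2 x ∧ 1 ≤ Real.logb 2 x := by
    intro x hx
    constructor
    · rw [Real.logb, le_div_iff₀ (Real.log_pos (by norm_num))]
      have h1 : 0 ≤ Real.log x := Real.log_nonneg (by linarith)
      have h2 := Real.log_two_lt_d9
      nlinarith
    · rw [Real.le_logb_iff_rpow_le (by norm_num) (by linarith)]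
      simpa using hx
  obtain ⟨hlh, hlh1⟩ := hlogle h hh2
  obtain ⟨hle, hle1⟩ := hlogle e he2
  have hlog : Real.log (4 * M) ≤ C5 * (Real.logb 2 e * Real.logb 2 h) := by
    calc Real.log (4 * M) ≤ Real.log (c4 * (h ^ (2 * n + 3) * e ^ 3)) :=
          Real.log_le_log (by positivity) hM4
      _ = Real.log c4 + ((2 * n + 3 : ℕ) * Real.log h + (3 : ℕ) * Real.log e) := by
          rw [Real.log_mul (x := c4) (y := h ^ (2 * n + 3) * e ^ 3) (by positivity) (by positivity),
            Real.log_mul (x := h ^ (2 * n + 3)) (y := e ^ 3) (by positivity) (by positivity),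
            Real.log_pow, Real.log_pow]
      _ ≤ Real.log c4 * (Real.logb 2 e * Real.logb 2 h) +
          ((2 * n + 3 : ℕ) * (Real.logb 2 e * Real.logb 2 h) + (3 : ℕ) * (Real.logb 2 e * Real.logb 2 h)) := by
          have h1 : 1 ≤ Real.logb 2 e * Real.logb 2 h := by nlinarith
          have h2 : Real.log h ≤ Real.logb 2 e * Real.logb 2 h := by nlinarith
          have h3 : Real.log e ≤ Real.logb 2 e * Real.logb 2 h := by nlinarith
          gcongr
          nlinarith
      _ = _ := by rw [hC5]; push_cast; ring
  have hlog0 : 1 ≤ Real.log (4 * M) := by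
    rw [Real.le_log_iff_exp_le (by positivity)]
    linarith [Real.exp_one_lt_d9]
  have hl : (Nat.log 2 N : ℝ) + 1 ≤ Real.logb 2 (2 * N) := by
    rw [Real.logb_mul (by norm_num) (by positivity), Real.logb_self_eq_one (by norm_num)]
    have := Real.natLog_le_logb N 2
    push_cast at this
    linarith
  have hΦAh : 0 < Φ (A * h) := phi_pos hpre hdec (by positivity)
  set D := 70000 * ((V + 1) * (q * a1 * Φ (A * h))) * (8 * e) ^ 2 *
          ((Nat.log 2 N : ℝ) + 1) ^ 2 * Real.log (4 * M) with hD
  have hDpos : 0 < D := by positivity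
  have hlN1 : 1 ≤ Real.logb 2 (2 * N) := by
    have : (0:ℝ) ≤ Nat.log 2 N := Nat.cast_nonneg _
    linarith
  refine ⟨M, ⌈D⌉₊, by linarith, by linarith, Nat.le_ceil _, Nat.ceil_pos.2 hDpos, ?_⟩
  have hQ : Φ 1 ≤ e ^ 2 * Real.logb 2 e * P * (Real.logb 2 (2 * N)) ^ 2 * Real.logb 2 h := by
    calc Φ 1 = 1 ^ 2 * 1 * Φ 1 * 1 ^ 2 * 1 := by ring
      _ ≤ _ := by gcongr; linarith
  have hDle : D ≤ 70000 * ((V + 1) * (q * a1 * c2)) * 64 * C5 *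
      (e ^ 2 * Real.logb 2 e * P * (Real.logb 2 (2 * N)) ^ 2 * Real.logb 2 h) := by
    calc D ≤ 70000 * ((V + 1) * (q * a1 * (c2 * P))) * (8 * e) ^ 2 *
          (Real.logb 2 (2 * N)) ^ 2 * (C5 * (Real.logb 2 e * Real.logb 2 h)) := by
          rw [hD]; gcongr
      _ = _ := by ring
  calc ((⌈D⌉₊ : ℕ) : ℝ) ≤ D + 1 := (Nat.ceil_lt_add_one hDpos.le).le
    _ ≤ 70000 * ((V + 1) * (q * a1 * c2)) * 64 * C5 *
      (e ^ 2 * Real.logb 2 e * P * (Real.logb 2 (2 * N)) ^ 2 * Real.logb 2 h) +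
      1 / Φ 1 * (e ^ 2 * Real.logb 2 e * P * (Real.logb 2 (2 * N)) ^ 2 * Real.logb 2 h) := by
        refine add_le_add hDle ?_
        rw [one_div, ← div_eq_inv_mul, le_div_iff₀ hΦ1, one_mul]
        exact hQ
    _ = _ := by ring


theorem lux_abs {a1 q ε V : ℝ} (ha1 : 1 ≤ a1) (hq : 1 ≤ q) (hε : 0 < ε) (hε1 : ε ≤ 1 / 2)
    (hV : V = 4 ^ q) (I J : ℝ → ℝ)
    (hI0 : ∀ l, 0 < l → 0 ≤ I l) (hJ0 : ∀ l, 0 < l → 0 ≤ J l)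
    (hIs : ∀ l l', 0 < l → l ≤ l' → I l' ≤ a1 * (l / l') * I l)
    (hJs : ∀ l l', 0 < l → l ≤ l' → J l' ≤ a1 * (l / l') * J l)
    (hId : ∀ l l', 0 < l → l ≤ l' → I l ≤ (l' / l) ^ q * I l')
    (hIJ : ∀ l, 0 < l → I l ≤ V → |J l - I l| ≤ ε / 4) :
    (a1⁻¹) ^ 2 * (1 - ε) * sInf {l : ℝ | 0 < l ∧ I l ≤ 1} ≤ sInf {l : ℝ | 0 < l ∧ J l ≤ 1} ∧
    sInf {l : ℝ | 0 < l ∧ J l ≤ 1} ≤ a1 ^ 2 * (1 + ε) * sInf {l : ℝ | 0 < l ∧ I l ≤ 1} := by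
  have hne : ∀ K : ℝ → ℝ, (∀ l, 0 < l → 0 ≤ K l) →
      (∀ l l', 0 < l → l ≤ l' → K l' ≤ a1 * (l / l') * K l) →
      {l : ℝ | 0 < l ∧ K l ≤ 1}.Nonempty := by
    intro K hK0 hKs
    have h0 := hK0 1 one_pos
    have hp : 0 < a1 * K 1 + 1 := by positivity
    refine ⟨a1 * K 1 + 1, hp, (hKs 1 _ one_pos (by linarith [mul_nonneg (by linarith : 0 ≤ a1) h0])).trans ?_⟩
    rw [show a1 * (1 / (a1 * K 1 + 1)) * K 1 = (a1 * K 1) / (a1 * K 1 + 1) by ring, div_le_one hp]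
    linarith
  have hbd : ∀ K : ℝ → ℝ, BddBelow {l : ℝ | 0 < l ∧ K l ≤ 1} := fun K => ⟨0, fun l hl => hl.1.le⟩
  have hnn : ∀ K : ℝ → ℝ, 0 ≤ sInf {l : ℝ | 0 < l ∧ K l ≤ 1} :=
    fun K => Real.sInf_nonneg fun l hl => hl.1.le
  have hV1 : 1 ≤ V := by rw [hV]; exact Real.one_le_rpow (by norm_num) (by linarith)
  set L := sInf {l : ℝ | 0 < l ∧ I l ≤ 1} with hL
  have hL0 : 0 ≤ L := hnn I
  constructor
  · rcases hL0.eq_or_lt with h | hLp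
    · rw [← h, mul_zero]; exact hnn J
    set c := 1 - ε / 4 with hc
    have hc0 : 7 / 8 ≤ c := by rw [hc]; linarith
    have hc1 : c < 1 := by rw [hc]; linarith
    set l1 := c * L with hl1
    have hl1p : 0 < l1 := by positivity
    have hl1L : l1 < L := by nlinarith
    have hI1 : 1 < I l1 := by
      by_contra hcon
      push Not at hcon
      have := csInf_le (hbd I) (show l1 ∈ {l : ℝ | 0 < l ∧ I l ≤ 1} from ⟨hl1p, hcon⟩)
      linarith
    have hLc : L < L / c := by rw [lt_div_iff₀ (by linarith)]; nlinarith
    obtain ⟨l2, ⟨hl2p, hl2⟩, hl2L⟩ := exists_lt_of_csInf_lt (hne I hI0 hIs) hLc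
    have hLl2 : L ≤ l2 := csInf_le (hbd I) ⟨hl2p, hl2⟩
    have hIV : I l1 ≤ V := by
      have h1 := hId l1 l2 hl1p (by linarith)
      have h2 : l2 / l1 ≤ 4 := by
        rw [div_le_iff₀ hl1p, hl1]
        rw [lt_div_iff₀ (by linarith)] at hl2L
        nlinarith [mul_le_mul_of_nonneg_left hc0 hl2p.le]
      have h3 : (l2 / l1) ^ q ≤ V := by
        rw [hV]; exact Real.rpow_le_rpow (by positivity) h2 (by linarith)
      have h4 : 0 ≤ (l2 / l1) ^ q := by positivity
      nlinarith
    have hJ1 : c ≤ J l1 := by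
      have := (abs_le.1 (hIJ l1 hl1p hIV)).1
      rw [hc]; linarith
    have hfac : (a1⁻¹) ^ 2 * (1 - ε) * L ≤ a1⁻¹ * c * l1 := by
      have h1 : 0 < a1⁻¹ := by positivity
      have h2 : a1⁻¹ ≤ 1 := inv_le_one_of_one_le₀ ha1
      have h3 : 1 - ε ≤ c * c := by rw [hc]; nlinarith
      have h4 : (a1⁻¹) ^ 2 ≤ a1⁻¹ := by nlinarith
      calc (a1⁻¹) ^ 2 * (1 - ε) * L ≤ a1⁻¹ * (c * c) * L := by
            gcongr
            linarith
        _ = _ := by rw [hl1]; ring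
    refine hfac.trans (le_csInf (hne J hJ0 hJs) ?_)
    rintro l ⟨hlp, hl⟩
    rcases le_total l l1 with h | h
    · have h1 := hJs l l1 hlp h
      have h2 : c ≤ a1 * (l / l1) := by
        have : 0 ≤ a1 * (l / l1) := by positivity
        nlinarith
      rw [← mul_div_assoc, le_div_iff₀ hl1p] at h2
      rw [mul_assoc, inv_mul_le_iff₀ (by linarith)]
      exact h2
    · refine le_trans ?_ h
      have h2 : a1⁻¹ ≤ 1 := inv_le_one_of_one_le₀ ha1
      have h1 : 0 < a1⁻¹ := by positivity
      have : a1⁻¹ * c ≤ 1 := by nlinarith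
      nlinarith
  · set b := a1 * (1 + ε / 4) with hb
    have hb1 : 1 ≤ b := by rw [hb]; nlinarith
    have hbp : 0 < b := by linarith
    have h1 : sInf {l : ℝ | 0 < l ∧ J l ≤ 1} / b ≤ L := by
      refine le_csInf (hne I hI0 hIs) ?_
      rintro l ⟨hlp, hl⟩
      rw [div_le_iff₀ hbp]
      refine csInf_le (hbd J) ⟨by positivity, ?_⟩
      have h2 := hJs l (l * b) hlp (by nlinarith)
      have h3 := (abs_le.1 (hIJ l hlp (hl.trans hV1))).2
      refine h2.trans ?_
      rw [show a1 * (l / (l * b)) * J l = (a1 * J l) / b by field_simp, div_le_one hbp, hb]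
      gcongr
      linarith
    rw [div_le_iff₀ hbp] at h1
    have h2 : b ≤ a1 ^ 2 * (1 + ε) := by
      rw [hb]
      have : a1 ≤ a1 ^ 2 := by nlinarith
      gcongr
      linarith
    nlinarith

set_option maxHeartbeats 1000000 in
theorem main_cm {Φ : ℝ → ℝ} (hpre : IsPhiPrefun Φ) {a1 : ℝ} (ha1 : 1 ≤ a1)
    (hA1 : AIncP Φ 1 a1) {q : ℝ} (hq : 1 ≤ q) (hdec : DecQ Φ q) :
    ∃ C : ℝ, 0 < C ∧ ∀ {Ω : Type} [TopologicalSpace Ω] [CompactSpace Ω] [MeasurableSpace Ω]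
      [BorelSpace Ω] (μ : Measure Ω) [IsProbabilityMeasure μ] (N : ℕ) (_ : 1 ≤ N) (H : ℝ) (_ : 1 ≤ H)
      (X : Submodule ℝ C(Ω, ℝ)) [FiniteDimensional ℝ X] (_ : Module.finrank ℝ X = N)
      (_ : ∀ f ∈ X, ‖f‖ ≤ H * Real.sqrt (∫ x, f x ^ 2 ∂μ)) (ε : ℝ) (_ : 0 < ε) (_ : ε ≤ 1 / 2),
        ∃ m : ℕ,
          (m : ℝ) ≤ C * ε⁻¹ ^ 2 * Real.logb 2 ε⁻¹ * Φ (H ^ 2) *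
            (Real.logb 2 (2 * N)) ^ 2 * Real.logb 2 (2 * H ^ 2) ∧
          ∃ x : Fin m → Ω, ∀ f ∈ X,
            (a1⁻¹) ^ 2 * (1 - ε) * luxNorm μ Φ f ≤ discLuxNorm Φ x f ∧
            discLuxNorm Φ x f ≤ a1 ^ 2 * (1 + ε) * luxNorm μ Φ f := by
  have hV : (1:ℝ) ≤ 4 ^ q := Real.one_le_rpow (by norm_num) (by linarith)
  obtain ⟨C, hC, hCs⟩ := consts hpre ha1 hq hdec hV
  refine ⟨C, hC, ?_⟩
  intro Ω _ _ _ _ μ _ N hN1 H hH X _ hN hX ε hε hε1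
  have hdim := dim_le hpre ha1 hA1 hq hdec X hN hH hX
  obtain ⟨M, m, hM1, hM2, hm, hm0, hmC⟩ := hCs N H ε hN1 hH hdim hε hε1
  obtain ⟨x, hx⟩ := sample hpre ha1 hA1 hq hdec X hN1 hN hH hX hV (ε := ε / 8) (by positivity)
    (by linarith) rfl M m hM1 hM2 hm
  have hmr : (0:ℝ) < m := by exact_mod_cast hm0
  refine ⟨m, hmC, x, ?_⟩
  intro f hf
  have hscal : ∀ l l' t : ℝ, 0 < l → l ≤ l' → 0 ≤ t → Φ (t / l') ≤ a1 * (l / l') * Φ (t / l) := by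
    intro l l' t hl hll ht
    have hl' : 0 < l' := by linarith
    have := phi_scale hpre ha1 hA1 (c := l' / l) (t := t / l') (by rw [le_div_iff₀ hl]; linarith)
      (by positivity)
    rw [show l' / l * (t / l') = t / l by field_simp,
      show a1 / (l' / l) = a1 * (l / l') by field_simp] at this
    exact this
  have hdc : ∀ l l' t : ℝ, 0 < l → l ≤ l' → 0 ≤ t → Φ (t / l) ≤ (l' / l) ^ q * Φ (t / l') := by
    intro l l' t hl hll ht
    have hl' : 0 < l' := by linarith
    have := phi_dec hpre hdec (c := l' / l) (t := t / l') (by rw [le_div_iff₀ hl]; linarith)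
      (by positivity)
    rw [show l' / l * (t / l') = t / l by field_simp] at this
    exact this
  have hsm : ∀ l : ℝ, 0 < l → ∀ y, |(l⁻¹ • f) y| = |f y| / l := by
    intro l hl y
    rw [ContinuousMap.smul_apply, smul_eq_mul, abs_mul, abs_of_pos (inv_pos.2 hl)]
    field_simp
  have hIntg : ∀ l : ℝ, 0 < l → Integrable (fun y => Φ (|f y| / l)) μ := by
    intro l hl
    have := phi_integrable hpre (μ := μ) (l⁻¹ • f).continuous.measurable (cm_abs_le (l⁻¹ • f))
    simp only [hsm l hl] at this
    exact this
  refine lux_abs ha1 hq hε hε1 rfl (fun l => ∫ y, Φ (|f y| / l) ∂μ)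
    (fun l => (∑ j, Φ (|f (x j)| / l)) / (m : ℝ)) ?_ ?_ ?_ ?_ ?_ ?_
  · intro l hl
    exact integral_nonneg fun y => hpre.nonneg _ (by positivity)
  · intro l hl
    exact div_nonneg (Finset.sum_nonneg fun j _ => hpre.nonneg _ (by positivity)) hmr.le
  · intro l l' hl hll
    show ∫ y, Φ (|f y| / l') ∂μ ≤ a1 * (l / l') * ∫ y, Φ (|f y| / l) ∂μ
    rw [← integral_const_mul]
    exact integral_mono (hIntg l' (by linarith)) ((hIntg l hl).const_mul _)
      fun y => hscal l l' _ hl hll (abs_nonneg _)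
  · intro l l' hl hll
    show (∑ j, Φ (|f (x j)| / l')) / (m : ℝ) ≤ a1 * (l / l') * ((∑ j, Φ (|f (x j)| / l)) / (m : ℝ))
    rw [← mul_div_assoc, Finset.mul_sum]
    gcongr with j
    exact hscal l l' _ hl hll (abs_nonneg _)
  · intro l l' hl hll
    show ∫ y, Φ (|f y| / l) ∂μ ≤ (l' / l) ^ q * ∫ y, Φ (|f y| / l') ∂μ
    rw [← integral_const_mul]
    exact integral_mono (hIntg l hl) ((hIntg l' (by linarith)).const_mul _)
      fun y => hdc l l' _ hl hll (abs_nonneg _)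
  · intro l hl hI
    have h1 := hx (l⁻¹ • f) (X.smul_mem _ hf)
    simp only [hsm l hl] at h1
    have h2 := h1 hI
    show abs ((∑ j, Φ (|f (x j)| / l)) / (m : ℝ) - ∫ y, Φ (|f y| / l) ∂μ) ≤ ε / 4
    rw [show (∑ j, Φ (|f (x j)| / l)) / (m : ℝ) - ∫ y, Φ (|f y| / l) ∂μ =
      (∑ j, Φ (|f (x j)| / l) - m * ∫ y, Φ (|f y| / l) ∂μ) / m by field_simp, abs_div,
      abs_of_pos hmr, div_le_iff₀ hmr]
    linarith

/-- Theorem 3.2 / t3.2. Let `Φ ∈ Φ_w` (with constant `a_Φ(1)`) be such that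
`Φ ∈ (Dec)_q`, `q ∈ [1,∞)`. There is `C = C_Φ > 0` such that for every compact `Ω ⊂ ℝ^d` with
Borel probability measure `μ`, every `N ≥ 1`, `H ≥ 1`, every `N`-dimensional
`X_N ∈ NI_{2,∞}(H)`, and every `ε ∈ (0,1/2]`, there are
`m ≤ C ε^{-2} (log₂ ε⁻¹) Φ(H²) (log₂ 2N)² log₂ 2H²` points `x₁,…,x_m ∈ Ω` with
`a_Φ(1)⁻² (1−ε) ‖f‖_Φ ≤ ‖f‖_{Φ,x} ≤ a_Φ(1)² (1+ε) ‖f‖_Φ` for all `f ∈ X_N`. -/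
theorem statement2 (Φ : ℝ → ℝ) (hpre : IsPhiPrefun Φ)
    (a1 : ℝ) (ha1 : 1 ≤ a1) (hA1 : AIncP Φ 1 a1)
    (q : ℝ) (hq : 1 ≤ q) (hdec : DecQ Φ q) :
    ∃ C : ℝ, 0 < C ∧
      ∀ (d : ℕ) (Ω : Set (Fin d → ℝ)), IsCompact Ω →
      ∀ (μ : Measure Ω), IsProbabilityMeasure μ →
      ∀ N : ℕ, 1 ≤ N → ∀ H : ℝ, 1 ≤ H →
      ∀ X : Submodule ℝ (Ω → ℝ),
        (∀ f ∈ X, Continuous f) →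
        Module.finrank ℝ X = N →
        (∀ f ∈ X, supNorm f ≤ H * Real.sqrt (∫ y, (f y) ^ 2 ∂μ)) →
      ∀ ε : ℝ, 0 < ε → ε ≤ 1 / 2 →
        ∃ m : ℕ,
          (m : ℝ) ≤ C * ε⁻¹ ^ 2 * Real.logb 2 ε⁻¹ * Φ (H ^ 2) *
            (Real.logb 2 (2 * N)) ^ 2 * Real.logb 2 (2 * H ^ 2) ∧
          ∃ x : Fin m → Ω, ∀ f ∈ X,
            (a1⁻¹) ^ 2 * (1 - ε) * luxNorm μ Φ f ≤ discLuxNorm Φ x f ∧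
            discLuxNorm Φ x f ≤ a1 ^ 2 * (1 + ε) * luxNorm μ Φ f := by
  obtain ⟨C, hC, hmain⟩ := main_cm hpre ha1 hA1 hq hdec
  refine ⟨C, hC, ?_⟩
  intro d Ω hΩ μ hμ N hN1 H hH X hXc hN hX ε hε hε1
  have : CompactSpace Ω := isCompact_iff_compactSpace.1 hΩ
  have hXfin : FiniteDimensional ℝ X := Module.finite_of_finrank_pos (by omega)
  let φ : C(Ω, ℝ) →ₗ[ℝ] (Ω → ℝ) := ContinuousMap.coeFnLinearMap ℝ
  have hφ : ∀ f : C(Ω, ℝ), φ f = ⇑f := fun f => rfl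
  have hφinj : Function.Injective φ := DFunLike.coe_injective
  have hmem : ∀ f : C(Ω, ℝ), f ∈ X.comap φ ↔ ⇑f ∈ X := fun f => Iff.rfl
  let e : (X.comap φ) ≃ₗ[ℝ] X := LinearEquiv.ofBijective
    (φ.restrict (p := X.comap φ) (q := X) (fun f hf => hf)) (by
      constructor
      · intro f g hfg
        apply Subtype.ext
        apply hφinj
        exact congrArg Subtype.val hfg
      · rintro ⟨f, hf⟩
        exact ⟨⟨⟨f, hXc f hf⟩, hf⟩, rfl⟩)
  have hfin' : FiniteDimensional ℝ (X.comap φ) := e.symm.finiteDimensional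
  have hN' : Module.finrank ℝ (X.comap φ) = N := by rw [e.finrank_eq, hN]
  have hX' : ∀ f ∈ X.comap φ, ‖f‖ ≤ H * Real.sqrt (∫ x, f x ^ 2 ∂μ) := by
    intro f hf
    refine le_trans ?_ (hX f hf)
    have hbd : BddAbove (Set.range fun x => |f x|) :=
      ⟨‖f‖, by rintro _ ⟨x, rfl⟩; exact cm_abs_le f x⟩
    refine (ContinuousMap.norm_le f (Real.iSup_nonneg fun x => abs_nonneg _)).2 fun x => ?_
    exact le_ciSup hbd x
  obtain ⟨m, hm, x, hx⟩ := hmain μ N hN1 H hH (X.comap φ) hN' hX' ε hε hε1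
  exact ⟨m, hm, x, fun f hf => hx ⟨f, hXc f hf⟩ hf⟩
end

section
/- Let a, b > 0, let X_N be an N-dimensional vector space equipped with a norm ‖·‖, and let F ⊂ X_N be a bounded subset. Then there is a constant C(a, b) > 0 depending only on a and b such that Σ_{n > ⌊log N⌋} (2^{an}·e_n(F, ‖·‖))^b ≤ C(a, b) · Σ_{n ≤ ⌊log N⌋} (2^{an}·e_n(F, ‖·‖))^b. -/
open MeasureTheory

open Metric Module in
open scoped Function ENNReal in
/-- Volume bound for separated sets in a ball. -/
theorem sep_card_bound {E : Type} [NormedAddCommGroup E] [NormedSpace ℝ E] [FiniteDimensional ℝ E]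
    (c₀ : E) (r ε : ℝ) (hr : 0 < r) (hε : 0 < ε) (s : Finset E) (hs : ∀ c ∈ s, ‖c - c₀‖ < r)
    (h : ∀ c ∈ s, ∀ d ∈ s, c ≠ d → ε ≤ ‖c - d‖) :
    (s.card : ℝ) ≤ (1 + 2 * r / ε) ^ finrank ℝ E := by
  borelize E
  let μ : Measure E := Measure.addHaar
  let δ : ℝ := ε / 2
  let ρ : ℝ := r + ε / 2
  have δpos : 0 < δ := by positivity
  have ρpos : 0 < ρ := by positivity
  set A := ⋃ c ∈ s, ball (c : E) δ with hA
  have D : Set.Pairwise (s : Set E) (Disjoint on fun c => ball (c : E) δ) := by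
    rintro c hc d hd hcd
    apply ball_disjoint_ball
    rw [dist_eq_norm]
    have := h c hc d hd hcd
    simp only [δ]
    linarith
  have A_subset : A ⊆ ball c₀ ρ := by
    refine Set.iUnion₂_subset fun x hx => ?_
    apply ball_subset_ball'
    have := hs x hx
    rw [dist_eq_norm]
    simp only [δ, ρ]
    linarith
  have I :
    (s.card : ℝ≥0∞) * ENNReal.ofReal (δ ^ finrank ℝ E) * μ (ball 0 1) ≤
      ENNReal.ofReal (ρ ^ finrank ℝ E) * μ (ball 0 1) :=
    calc
      (s.card : ℝ≥0∞) * ENNReal.ofReal (δ ^ finrank ℝ E) * μ (ball 0 1) = μ A := by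
        rw [hA, measure_biUnion_finset D fun c _ => measurableSet_ball]
        simp only [μ.addHaar_ball_of_pos _ δpos]
        simp only [Finset.sum_const, nsmul_eq_mul, mul_assoc]
      _ ≤ μ (ball c₀ ρ) := measure_mono A_subset
      _ = ENNReal.ofReal (ρ ^ finrank ℝ E) * μ (ball 0 1) := by
        simp only [μ.addHaar_ball_of_pos _ ρpos]
  have J : (s.card : ℝ≥0∞) * ENNReal.ofReal (δ ^ finrank ℝ E) ≤ ENNReal.ofReal (ρ ^ finrank ℝ E) :=
    (ENNReal.mul_le_mul_iff_left (measure_ball_pos _ _ zero_lt_one).ne' measure_ball_lt_top.ne).1 I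
  have K := ENNReal.toReal_le_of_le_ofReal (pow_nonneg ρpos.le _) J
  rw [ENNReal.toReal_mul, ENNReal.toReal_natCast, ENNReal.toReal_ofReal (by positivity)] at K
  have e : 1 + 2 * r / ε = ρ / δ := by
    simp only [ρ, δ]
    field_simp
    ring
  rw [e, div_pow, le_div_iff₀ (by positivity)]
  exact K

/-- Every subset of a ball has a small internal net. -/
theorem exists_net {E : Type} [NormedAddCommGroup E] [NormedSpace ℝ E] [FiniteDimensional ℝ E]
    (c₀ : E) (r ε : ℝ) (hr : 0 < r) (hε : 0 < ε) (G : Set E) (hG : ∀ c ∈ G, ‖c - c₀‖ < r) :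
    ∃ T : Finset E, ↑T ⊆ G ∧ (T.card : ℝ) ≤ (1 + 2 * r / ε) ^ Module.finrank ℝ E ∧
      ∀ f ∈ G, ∃ g ∈ T, ‖f - g‖ < ε := by
  classical
  let P : ℕ → Prop := fun k => ∃ T : Finset E, ↑T ⊆ G ∧
    (∀ c ∈ T, ∀ d ∈ T, c ≠ d → ε ≤ ‖c - d‖) ∧ T.card = k
  have hbd : ∀ T : Finset E, ↑T ⊆ G → (∀ c ∈ T, ∀ d ∈ T, c ≠ d → ε ≤ ‖c - d‖) →
      (T.card : ℝ) ≤ (1 + 2 * r / ε) ^ Module.finrank ℝ E := fun T hT h =>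
    sep_card_bound c₀ r ε hr hε T (fun c hc => hG c (hT hc)) h
  set B := ⌊(1 + 2 * r / ε) ^ Module.finrank ℝ E⌋₊ with hB
  have hP0 : P 0 := ⟨∅, by simp, by simp, by simp⟩
  have hPm : P (Nat.findGreatest P B) := Nat.findGreatest_spec (Nat.zero_le _) hP0
  obtain ⟨T, hT, hsep, hcard⟩ := hPm
  refine ⟨T, hT, hbd T hT hsep, fun f hf => ?_⟩
  by_contra! hcon
  have hfT : f ∉ T := fun h => by
    have := hcon f h
    simp at this
    linarith
  have hsub : ↑(insert f T) ⊆ G := by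
    intro x hx
    rcases Finset.mem_insert.1 hx with rfl | h
    · exact hf
    · exact hT h
  have hsep' : ∀ c ∈ insert f T, ∀ d ∈ insert f T, c ≠ d → ε ≤ ‖c - d‖ := by
    intro c hc d hd hcd
    rcases Finset.mem_insert.1 hc with rfl | hc'
    · rcases Finset.mem_insert.1 hd with rfl | hd
      · exact absurd rfl hcd
      · exact hcon d hd
    · rcases Finset.mem_insert.1 hd with rfl | hd
      · rw [norm_sub_rev]; exact hcon c hc'
      · exact hsep c hc' d hd hcd
  have hle : (insert f T).card ≤ B := Nat.le_floor (hbd _ hsub hsep')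
  have h2 := Nat.le_findGreatest (P := P) hle ⟨_, hsub, hsep', rfl⟩
  rw [Finset.card_insert_of_notMem hfT, hcard] at h2
  omega

/-- The admissible radii. -/
def radii {X : Type} [NormedAddCommGroup X] (F : Set X) (n : ℕ) : Set ℝ :=
  {ε : ℝ | 0 < ε ∧ ∃ T : Finset X, ↑T ⊆ F ∧
    T.card ≤ (if n = 0 then 1 else 2 ^ 2 ^ n) ∧ ∀ f ∈ F, ∃ g ∈ T, ‖f - g‖ < ε}

theorem radii_bdd {X : Type} [NormedAddCommGroup X] (F : Set X) (n : ℕ) :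
    BddBelow (radii F n) := ⟨0, fun _ h => h.1.le⟩

theorem radii_nonempty {X : Type} [NormedAddCommGroup X] (F : Set X)
    (hF : Bornology.IsBounded F) (n : ℕ) : (radii F n).Nonempty := by
  rcases F.eq_empty_or_nonempty with rfl | ⟨x, hx⟩
  · exact ⟨1, one_pos, ∅, by simp, by simp, by simp⟩
  · refine ⟨Metric.diam F + 1, by positivity, {x}, by simpa using hx, ?_, fun f hf => ⟨x, by simp, ?_⟩⟩
    · rw [Finset.card_singleton]
      split_ifs
      · exact le_rfl
      · exact Nat.one_le_two_pow
    · rw [← dist_eq_norm]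
      have := Metric.dist_le_diam_of_mem hF hf hx
      linarith

theorem ent_nonneg {X : Type} [NormedAddCommGroup X] (F : Set X) (n : ℕ) :
    0 ≤ entropyNumD (fun f g => ‖f - g‖) F n :=
  Real.sInf_nonneg (s := radii F n) fun _ h => h.1.le

theorem card_if_mono {n L : ℕ} (h : L ≤ n) :
    (if L = 0 then 1 else 2 ^ 2 ^ L) ≤ (if n = 0 then 1 else 2 ^ 2 ^ n) := by
  split_ifs with h1 h2 h2
  · exact le_rfl
  · exact Nat.one_le_two_pow
  · omega
  · gcongr <;> norm_num

theorem ent_decay {X : Type} [NormedAddCommGroup X] [NormedSpace ℝ X]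
    (N : ℕ) (hN : 1 ≤ N) (hfin : Module.finrank ℝ X = N) (F : Set X)
    (hF : Bornology.IsBounded F) (m : ℕ) :
    entropyNumD (fun f g => ‖f - g‖) F (Nat.log 2 N + 1 + m) ≤
      8 * (2 : ℝ) ^ (-(2 : ℝ) ^ m) * entropyNumD (fun f g => ‖f - g‖) F (Nat.log 2 N) := by
  classical
  have : FiniteDimensional ℝ X := Module.finite_of_finrank_pos (by omega)
  set L := Nat.log 2 N with hL
  set q : ℝ := 8 * (2 : ℝ) ^ (-(2 : ℝ) ^ m) with hq
  have hqpos : 0 < q := by positivity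
  have hq' : q = 8 / 2 ^ 2 ^ m := by
    rw [hq, Real.rpow_neg (by norm_num), div_eq_mul_inv]
    congr 2
    exact_mod_cast Real.rpow_natCast (2 : ℝ) (2 ^ m)
  have key : ∀ r ∈ radii F L, q * r ∈ radii F (L + 1 + m) := by
    rintro r ⟨hr, T, hT, hcard, hcov⟩
    refine ⟨by positivity, ?_⟩
    rcases Nat.eq_zero_or_pos m with rfl | hm
    · refine ⟨T, hT, hcard.trans (card_if_mono (by omega)), fun f hf => ?_⟩
      obtain ⟨g, hg, hfg⟩ := hcov f hf
      refine ⟨g, hg, hfg.trans_le ?_⟩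
      rw [hq']
      norm_num
      linarith
    · have hnet := fun c => exists_net c r (q * r) hr (by positivity) (F ∩ {x | ‖x - c‖ < r})
        (fun x hx => hx.2)
      choose S hS hScard hScov using hnet
      refine ⟨T.biUnion S, ?_, ?_, ?_⟩
      · intro x hx
        simp only [Finset.coe_biUnion, Set.mem_iUnion] at hx
        obtain ⟨c, _, hx⟩ := hx
        exact (hS c hx).1
      · rw [if_neg (by omega)]
        have h1 : (T.card : ℝ) ≤ 2 ^ N := by
          have : T.card ≤ 2 ^ N := by
            refine hcard.trans ?_
            split_ifs
            · exact Nat.one_le_two_pow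
            · exact Nat.pow_le_pow_right (by norm_num) (Nat.pow_log_le_self 2 (by omega))
          exact_mod_cast this
        have h2 : ((T.biUnion S).card : ℝ) ≤ T.card * (1 + 2 * r / (q * r)) ^ N := by
          calc ((T.biUnion S).card : ℝ) ≤ ∑ c ∈ T, ((S c).card : ℝ) := by
                exact_mod_cast Finset.card_biUnion_le
            _ ≤ ∑ c ∈ T, (1 + 2 * r / (q * r)) ^ N := by
                refine Finset.sum_le_sum fun c _ => ?_
                rw [← hfin]
                exact hScard c
            _ = _ := by simp
        have hlt : N < 2 ^ (L + 1) := Nat.lt_pow_succ_log_self (by norm_num) N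
        have h4 : (4 : ℝ) ≤ 2 ^ 2 ^ m := by
          calc (4 : ℝ) = 2 ^ 2 ^ 1 := by norm_num
            _ ≤ _ := by
              gcongr <;> norm_num
              exact hm
        have h3 : 2 * (1 + 2 * r / (q * r)) ≤ (2 : ℝ) ^ 2 ^ m := by
          have : 2 * r / (q * r) = 2 ^ 2 ^ m / 4 := by
            rw [hq']
            field_simp
            norm_num
          rw [this]
          linarith
        have h5 : ((T.biUnion S).card : ℝ) ≤ 2 ^ 2 ^ (L + 1 + m) := by
          calc ((T.biUnion S).card : ℝ) ≤ T.card * (1 + 2 * r / (q * r)) ^ N := h2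
            _ ≤ 2 ^ N * (1 + 2 * r / (q * r)) ^ N := by gcongr
            _ = (2 * (1 + 2 * r / (q * r))) ^ N := by rw [mul_pow]
            _ ≤ ((2 : ℝ) ^ 2 ^ m) ^ N := by gcongr
            _ = 2 ^ (2 ^ m * N) := by rw [pow_mul]
            _ ≤ 2 ^ (2 ^ m * 2 ^ (L + 1)) := by
              gcongr
              norm_num
            _ = _ := by rw [← pow_add, add_comm m]
        exact_mod_cast h5
      · intro f hf
        obtain ⟨c, hc, hfc⟩ := hcov f hf
        obtain ⟨g, hg, hfg⟩ := hScov c f ⟨hf, hfc⟩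
        exact ⟨g, Finset.mem_biUnion.2 ⟨c, hc, hg⟩, hfg⟩
  have hd : sInf (radii F (L + 1 + m)) / q ≤ sInf (radii F L) := by
    refine le_csInf (radii_nonempty F hF L) fun r hr => ?_
    rw [div_le_iff₀ hqpos, mul_comm]
    exact csInf_le (radii_bdd F _) (key r hr)
  rw [div_le_iff₀ hqpos, mul_comm] at hd
  exact hd

theorem summ_aux (a b : ℝ) (hb : 0 < b) :
    Summable fun m : ℕ => (2 : ℝ) ^ (b * (a * m - (2 : ℝ) ^ m)) := by
  refine summable_of_ratio_test_tendsto_lt_one (l := 0) one_pos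
    (Filter.Eventually.of_forall fun n => by positivity) ?_
  have : (fun n : ℕ => ‖(2 : ℝ) ^ (b * (a * (n + 1 : ℕ) - (2 : ℝ) ^ (n + 1)))‖ /
      ‖(2 : ℝ) ^ (b * (a * n - (2 : ℝ) ^ n))‖) = fun n : ℕ => (2 : ℝ) ^ (b * (a - (2 : ℝ) ^ n)) := by
    funext n
    rw [Real.norm_of_nonneg (by positivity), Real.norm_of_nonneg (by positivity),
      ← Real.rpow_sub (by norm_num)]
    congr 1
    push_cast
    ring
  rw [this]
  refine (tendsto_rpow_atBot_of_base_gt_one 2 (by norm_num)).comp ?_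
  refine Filter.Tendsto.const_mul_atBot hb ?_
  simp only [sub_eq_add_neg]
  refine Filter.tendsto_atBot_add_const_left _ _ ?_
  exact Filter.tendsto_neg_atTop_atBot.comp (tendsto_pow_atTop_atTop_of_one_lt (by norm_num))

/-- Lemma lem4. For `a, b > 0` there is `C(a,b) > 0` such that for every
`N`-dimensional normed space `X_N` and every bounded `F ⊂ X_N`,
`Σ_{n > ⌊log₂ N⌋} (2^{an} e_n(F))^b ≤ C(a,b) Σ_{n ≤ ⌊log₂ N⌋} (2^{an} e_n(F))^b`. -/
theorem statement6 (a b : ℝ) (ha : 0 < a) (hb : 0 < b) :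
    ∃ C : ℝ, 0 < C ∧
      ∀ (X : Type) [NormedAddCommGroup X] [NormedSpace ℝ X],
      ∀ N : ℕ, 1 ≤ N → Module.finrank ℝ X = N →
      ∀ F : Set X, Bornology.IsBounded F →
        (∑' n : ℕ, if Nat.log 2 N < n then
            ((2 : ℝ) ^ (a * (n : ℝ)) * entropyNumD (fun f g => ‖f - g‖) F n) ^ b else 0) ≤
          C * ∑ n ∈ Finset.range (Nat.log 2 N + 1),
            ((2 : ℝ) ^ (a * (n : ℝ)) * entropyNumD (fun f g => ‖f - g‖) F n) ^ b := by
  set S : ℝ := ∑' m : ℕ, (2 : ℝ) ^ (b * (a * m - (2 : ℝ) ^ m)) with hS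
  have hS0 : 0 ≤ S := tsum_nonneg fun m => by positivity
  refine ⟨((8 : ℝ) * 2 ^ a) ^ b * S + 1, by positivity, ?_⟩
  intro X _ _ N hN hfin F hF
  set L := Nat.log 2 N with hL
  set e : ℕ → ℝ := fun n => entropyNumD (fun f g => ‖f - g‖) F n with he
  have he0 : ∀ n, 0 ≤ e n := fun n => ent_nonneg F n
  set A : ℝ := ((2 : ℝ) ^ (a * (L : ℝ)) * e L) ^ b with hA
  have hA0 : 0 ≤ A := Real.rpow_nonneg (mul_nonneg (by positivity) (he0 _)) _
  set t : ℕ → ℝ := fun n => if L < n then ((2 : ℝ) ^ (a * (n : ℝ)) * e n) ^ b else 0 with ht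
  have ht0 : ∀ n, 0 ≤ t n := fun n => by
    simp only [ht]
    split_ifs
    · exact Real.rpow_nonneg (mul_nonneg (by positivity) (he0 _)) _
    · exact le_rfl
  have hsum : A ≤ ∑ n ∈ Finset.range (L + 1), ((2 : ℝ) ^ (a * (n : ℝ)) * e n) ^ b :=
    Finset.single_le_sum (f := fun n : ℕ => ((2 : ℝ) ^ (a * (n : ℝ)) * e n) ^ b)
      (fun n _ => Real.rpow_nonneg (mul_nonneg (by positivity) (he0 _)) _)
      (Finset.mem_range.2 (Nat.lt_succ_self L))
  have hterm : ∀ m : ℕ, t (m + (L + 1)) ≤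
      (((8 : ℝ) * 2 ^ a) ^ b * A) * (2 : ℝ) ^ (b * (a * m - (2 : ℝ) ^ m)) := by
    intro m
    simp only [ht]
    rw [if_pos (by omega)]
    have h1 : e (m + (L + 1)) ≤ 8 * (2 : ℝ) ^ (-(2 : ℝ) ^ m) * e L := by
      rw [add_comm m]
      exact ent_decay N hN hfin F hF m
    have h2 : (2 : ℝ) ^ (a * ((m + (L + 1) : ℕ) : ℝ)) * e (m + (L + 1)) ≤
        (8 * 2 ^ a) * ((2 : ℝ) ^ (a * (L : ℝ)) * e L) * (2 : ℝ) ^ (a * m - (2 : ℝ) ^ m) := by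
      calc _ ≤ (2 : ℝ) ^ (a * ((m + (L + 1) : ℕ) : ℝ)) * (8 * (2 : ℝ) ^ (-(2 : ℝ) ^ m) * e L) := by
            gcongr
        _ = _ := by
            have : a * ((m + (L + 1) : ℕ) : ℝ) = a + a * L + a * m := by push_cast; ring
            rw [this, Real.rpow_add (by norm_num), Real.rpow_add (by norm_num), sub_eq_add_neg,
              Real.rpow_add (by norm_num)]
            ring
    calc _ ≤ ((8 * 2 ^ a) * ((2 : ℝ) ^ (a * (L : ℝ)) * e L) *
          (2 : ℝ) ^ (a * m - (2 : ℝ) ^ m)) ^ b :=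
          Real.rpow_le_rpow (mul_nonneg (by positivity) (he0 _)) h2 hb.le
      _ = _ := by
          have h3 := he0 L
          rw [Real.mul_rpow (by positivity) (by positivity),
            Real.mul_rpow (by positivity) (by positivity), ← Real.rpow_mul (by norm_num),
            mul_comm _ b]
  have hsm := (summ_aux a b hb).mul_left (((8 : ℝ) * 2 ^ a) ^ b * A)
  have hts : Summable fun m => t (m + (L + 1)) :=
    Summable.of_nonneg_of_le (fun m => ht0 _) hterm hsm
  have hts' : Summable t := (summable_nat_add_iff (L + 1)).1 hts
  have hz : ∑ n ∈ Finset.range (L + 1), t n = 0 := Finset.sum_eq_zero fun n hn => by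
    simp only [ht]
    rw [if_neg]
    have := Finset.mem_range.1 hn
    omega
  have hle : ∑' n, t n ≤ ((8 : ℝ) * 2 ^ a) ^ b * A * S := by
    rw [← hts'.sum_add_tsum_nat_add (L + 1), hz, zero_add, hS, ← tsum_mul_left]
    exact hts.tsum_le_tsum hterm hsm
  calc ∑' n, t n ≤ ((8 : ℝ) * 2 ^ a) ^ b * A * S := hle
    _ ≤ (((8 : ℝ) * 2 ^ a) ^ b * S + 1) * A := by nlinarith
    _ ≤ _ := by gcongr
end
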